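/- (Generalized discrete Riesz inequality.) Let d ≥ 2, let u, v : ℤ^d → [0,∞) be admissible, u* = R_{ℤ^d} u, v* = R_{ℤ^d} v, let H : [0,∞) → [0,∞) be nonincreasing, and let G : [0,∞)×[0,∞) → [0,∞) be supermodular with G(0,0) = 0. Then Σ_{x,y∈ℤ^d} G(u(x), v(y)) H(d(x,y)) ≤ Σ_{x,y∈ℤ^d} G(u*(x), v*(y)) H(d(x,y)), where the sums are taken in [0,∞]. Moreover, if u is Schwarz symmetric with strictly decreasing values a₁(u) > a₂(u) > a₃(u) > ⋯, G is strictly supermodular, H(n) > H(n+1) for some n ∈ ℕ, and Σ_{x,y∈ℤ^d} G(u*(x), v*(y)) H(d(x,y)) < ∞, then equality holds if and only if v = v*. -/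

import Mathlib

open Filter Topology

noncomputable section

abbrev ZLat (d : ℕ) := Fin d → ℤ

def stdVec (d : ℕ) (i : Fin d) : Fin d → ℝ := fun j => if j = i then 1 else 0

/-- The set of directions E⃗ ⊆ ℝ^d. -/
def Evec (d : ℕ) : Set (Fin d → ℝ) :=
  {e | (∃ i, e = stdVec d i) ∨
    (∃ i j : Fin d, i < j ∧ e = fun k => (stdVec d i k + stdVec d j k) / 2) ∨
    (∃ i j : Fin d, i < j ∧ e = fun k => (stdVec d i k - stdVec d j k) / 2)}

/-- A fixed enumeration of E⃗ (for d = 2 it is e₁, e₂, (e₁+e₂)/2, (e₁-e₂)/2). -/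
def EvecList (d : ℕ) : List (Fin d → ℝ) :=
  ((List.finRange d).map (stdVec d)) ++
  ((List.finRange d).flatMap fun i => (List.finRange d).filterMap fun j =>
    if i < j then some (fun k => (stdVec d i k + stdVec d j k) / 2) else none) ++
  ((List.finRange d).flatMap fun i => (List.finRange d).filterMap fun j =>
    if i < j then some (fun k => (stdVec d i k - stdVec d j k) / 2) else none)

/-- The n-th largest value of `u`, counted with multiplicity (1-indexed). -/
def nthLargest {α : Type*} (u : α → NNReal) (n : ℕ) : NNReal :=
  sSup {t | ∃ Ω : Finset α, Ω.card = n ∧ ∀ x ∈ Ω, t ≤ u x}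

/-- The 1-indexed position of the point with doubled coordinate `m` in the
spiral order 0, 1, −1, 2, −2, … (for even m) resp. 1/2, −1/2, 3/2, −3/2, … (for odd m). -/
def posIdx (m : ℤ) : ℕ := (if 0 < m then m else 1 - m).toNat

/-- `x` and `y` lie on a common line with direction `e`. -/
def sameLine {d : ℕ} (e : Fin d → ℝ) (x y : ZLat d) : Prop :=
  ∃ c : ℝ, (fun i => (x i : ℝ) - (y i : ℝ)) = c • e

/-- Twice the inner product ⟨e, x⟩, as an integer. -/
def pairing {d : ℕ} (e : Fin d → ℝ) (x : ZLat d) : ℤ :=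
  ⌊2 * ∑ i, e i * (x i : ℝ)⌋

/-- One-step rearrangement `R_e`. -/
def stepR {d : ℕ} (e : Fin d → ℝ) (u : ZLat d → NNReal) : ZLat d → NNReal :=
  fun x => nthLargest (fun y : {y : ZLat d // sameLine e x y} => u y.1) (posIdx (pairing e x))

/-- `R^k u` : k successive one-step rearrangements cycling through the fixed enumeration. -/
def iterR (d : ℕ) (u : ZLat d → NNReal) : ℕ → ZLat d → NNReal
  | 0 => u
  | k + 1 => stepR ((EvecList d).getD (k % (EvecList d).length) 0) (iterR d u k)

/-- The Schwarz rearrangement on ℤ^d : pointwise limit of `R^k u`. -/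
def RZd (d : ℕ) (u : ZLat d → NNReal) : ZLat d → NNReal :=
  fun x => limUnder atTop fun k => iterR d u k x

def Admissible {α : Type*} (u : α → NNReal) : Prop :=
  ∀ t : NNReal, 0 < t → {x | t < u x}.Finite

def Equimeasurable {α : Type*} (u v : α → NNReal) : Prop :=
  ∀ t : NNReal, 0 < t → Nonempty ({x | t < u x} ≃ {x | t < v x})

/-- Graph distance (ℓ¹ distance) on the lattice ℤ^d. -/
def latDist {d : ℕ} (x y : ZLat d) : ℕ := ∑ i, (x i - y i).natAbs

/-- The i-th standard basis vector of ℤ^d. -/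
def latE {d : ℕ} (i : Fin d) : ZLat d := fun j => if j = i then 1 else 0

/-- ‖∇u‖_p^p : the p-Sobolev energy, summing over each edge {x, x+e_i} once. -/
def gradEnergy (d : ℕ) (p : ℝ) (u : ZLat d → NNReal) : ENNReal :=
  ∑' (x : ZLat d) (i : Fin d), ENNReal.ofReal (|(u (x + latE i) : ℝ) - (u x : ℝ)| ^ p)

/-- ‖∇u‖_p. -/
def gradNorm (d : ℕ) (p : ℝ) (u : ZLat d → NNReal) : ENNReal :=
  gradEnergy d p u ^ (1 / p)

/-- Graph automorphism of the lattice graph ℤ^d. -/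
def IsLatAuto {d : ℕ} (σ : ZLat d ≃ ZLat d) : Prop :=
  ∀ x y : ZLat d, latDist (σ x) (σ y) = 1 ↔ latDist x y = 1

def Supermodular (G : NNReal → NNReal → NNReal) : Prop :=
  ∀ s t s₀ t₀ : NNReal, G (s + s₀) t + G s (t + t₀) ≤ G (s + s₀) (t + t₀) + G s t

def StrictlySupermodular (G : NNReal → NNReal → NNReal) : Prop :=
  ∀ s t s₀ t₀ : NNReal, 0 < s₀ → 0 < t₀ →
    G (s + s₀) t + G s (t + t₀) < G (s + s₀) (t + t₀) + G s t

/-- The values of `u` are strictly decreasing: a₁ > a₂ > a₃ > ⋯ . -/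
def StrictRan {α : Type*} (u : α → NNReal) : Prop :=
  ∀ n : ℕ, 0 < n → nthLargest u (n + 1) < nthLargest u n

/-!
The directions of `Evec d` are, up to scale, the positive roots of type `B_d`, and polarization in a
mirror `⟨·, τ⟩ = const` of such a root increases the functional: the `ℓ¹` distance of two lattice
points does not grow when both are brought to the same side of the mirror, and `G` satisfies the
four-point inequality of supermodularity. The one-step rearrangement along `τ` is the limit of
alternating polarizations in only two mirrors, the one through the origin and the next one. Indeed
the sum over a finite superlevel set of the squared distances to a generic point of the fundamental
alcove drops whenever a polarization moves the set, and a set fixed by both polarizations fills each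
of its lines in the spiral order. The same potential shows that `R^k` stabilizes on finite
superlevel sets, and truncation at positive heights carries the inequality to the limit.

For the equality case, a Schwarz symmetric `u` with strictly decreasing values is positive, because
an infinite set fixed by all one-step rearrangements is the whole lattice, and hence injective. If
`v ≠ v*`, then some polarization changes `v`, exchanging the values at some `y` and its mirror
image. The distances from a point `x` on the side of `y` to these two points can straddle any
prescribed `n`, and hence a drop of `H`, so this polarization strictly increases the functional.
-/

/-! ### The decreasing sequence of values -/

section NthLargest

variable {α : Type*} {u : α → NNReal}

theorem lt_nthLargest_iff (hu : Admissible u) {n : ℕ} (hn : 0 < n) {t : NNReal} :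
    t < nthLargest u n ↔ (n : ℕ∞) ≤ {x | t < u x}.encard := by
  have nonempty_of_card {Ω : Finset α} (hΩ : Ω.card = n) : Ω.Nonempty :=
    Finset.card_pos.1 (hΩ ▸ hn)
  constructor
  · intro ht
    have hne : {t | ∃ Ω : Finset α, Ω.card = n ∧ ∀ x ∈ Ω, t ≤ u x}.Nonempty := by
      by_contra hempty
      rw [nthLargest, Set.not_nonempty_iff_eq_empty.1 hempty] at ht
      simp at ht
    obtain ⟨s, ⟨Ω, rfl, hΩ⟩, hts⟩ := exists_lt_of_lt_csSup hne ht
    rw [← Set.encard_coe_eq_coe_finsetCard]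
    exact Set.encard_le_encard fun x hx => hts.trans_le (hΩ x hx)
  · intro hcard
    obtain ⟨Ω, hΩ, hcardΩ⟩ := Set.exists_subset_encard_eq hcard
    lift Ω to Finset α using Set.finite_of_encard_eq_coe hcardΩ
    have hΩn : Ω.card = n := by simpa using hcardΩ
    obtain ⟨M, hM⟩ := ((hu 1 one_pos).image u).bddAbove
    have hbdd : BddAbove {t | ∃ Ω : Finset α, Ω.card = n ∧ ∀ x ∈ Ω, t ≤ u x} := by
      refine ⟨max M 1, ?_⟩
      rintro s ⟨Ω', hΩ', hs⟩
      obtain ⟨x, hx⟩ := nonempty_of_card hΩ'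
      refine (hs x hx).trans ?_
      rcases lt_or_ge 1 (u x) with h | h
      · exact le_max_of_le_left (hM ⟨x, h, rfl⟩)
      · exact le_max_of_le_right h
    obtain ⟨z, hz, hmin⟩ := Ω.exists_min_image u (nonempty_of_card hΩn)
    exact (hΩ hz).trans_le (le_csSup hbdd ⟨Ω, hΩn, hmin⟩)

theorem StrictRan.infinite_support (hran : StrictRan u) (hu : Admissible u) :
    {x | 0 < u x}.Infinite := by
  refine Set.encard_eq_top_iff.1 (ENat.eq_top_iff_forall_ge.2 fun n => ?_)
  have hpos : 0 < nthLargest u (n + 1) := (hran (n + 1) n.succ_pos).pos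
  exact (Nat.cast_le.2 n.le_succ).trans ((lt_nthLargest_iff hu n.succ_pos).1 hpos)

theorem StrictRan.injOn_support (hran : StrictRan u) (hu : Admissible u) :
    Set.InjOn u {x | 0 < u x} := by
  intro x hx y _ hxy
  by_contra hne
  have hfin : {z | u x < u z}.Finite := hu _ hx
  obtain ⟨n, hn⟩ := ENat.ne_top_iff_exists.1 hfin.encard_lt_top.ne
  have hupper : nthLargest u (n + 1) ≤ u x := by
    rw [← not_lt, lt_nthLargest_iff hu n.succ_pos, ← hn, Nat.cast_le]
    exact n.not_succ_le_self
  refine (hran (n + 1) n.succ_pos).not_ge (hupper.trans (le_of_forall_lt fun t ht => ?_))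
  rw [lt_nthLargest_iff hu (Nat.succ_pos _)]
  calc ((n + 1 + 1 : ℕ) : ℕ∞) = (insert x (insert y {z | u x < u z})).encard := by
        rw [Set.encard_insert_of_notMem (by simp [hne]),
          Set.encard_insert_of_notMem (by simp [hxy]), ← hn]
        norm_cast
    _ ≤ {z | t < u z}.encard := by
        refine Set.encard_le_encard ?_
        rintro z (rfl | rfl | hz)
        exacts [ht, ht.trans_eq hxy, ht.trans hz]

end NthLargest

/-! ### Polarization -/

/-- An involution of `α` together with a half-space: the setting of two-point rearrangements. The
half-space is closed, so that the points of the wall (which are fixed by the involution) belong to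
it. -/
structure Mirror (α : Type*) where
  reflect : α → α
  involutive : Function.Involutive reflect
  side : Set α
  mem_side_or : ∀ x, x ∈ side ∨ reflect x ∈ side
  reflect_eq_self : ∀ x ∈ side, reflect x ∈ side → reflect x = x

namespace Mirror

variable {α : Type*} (m : Mirror α)

open Classical in
/-- The polarization of a function: of the two values at `x` and `m.reflect x`, the larger one is
put on `m.side`. -/
def polarize (u : α → NNReal) : α → NNReal := fun x =>
  if x ∈ m.side then max (u x) (u (m.reflect x)) else min (u x) (u (m.reflect x))

/-- The polarization of a set, which acts on the superlevel sets of a function when the function is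
polarized. -/
def polarizeSet (A : Set α) : Set α :=
  {x | x ∈ A ∧ m.reflect x ∈ A ∨ x ∈ m.side ∧ (x ∈ A ∨ m.reflect x ∈ A)}

variable {m} {u : α → NNReal} {A L : Set α} {x : α}

theorem polarize_of_mem_side (hx : x ∈ m.side) :
    m.polarize u x = max (u x) (u (m.reflect x)) :=
  if_pos hx

theorem polarize_reflect (hx : x ∈ m.side) :
    m.polarize u (m.reflect x) = min (u x) (u (m.reflect x)) := by
  by_cases hx' : m.reflect x ∈ m.side
  · simp [polarize, m.reflect_eq_self x hx hx', hx]
  · rw [polarize, if_neg hx', m.involutive, min_comm]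

theorem mem_polarizeSet_of_mem_side (hx : x ∈ m.side) :
    x ∈ m.polarizeSet A ↔ x ∈ A ∨ m.reflect x ∈ A := by
  simp only [polarizeSet, Set.mem_ofPred_eq]
  tauto

theorem reflect_mem_polarizeSet (hx : x ∈ m.side) :
    m.reflect x ∈ m.polarizeSet A ↔ x ∈ A ∧ m.reflect x ∈ A := by
  have hwall := m.reflect_eq_self x hx
  simp only [polarizeSet, Set.mem_ofPred_eq, m.involutive x]
  grind

theorem superlevel_polarize (m : Mirror α) (u : α → NNReal) (t : NNReal) :
    {x | t < m.polarize u x} = m.polarizeSet {x | t < u x} := by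
  ext x
  by_cases hx : x ∈ m.side
  · simp only [polarize, polarizeSet, Set.mem_ofPred_eq, if_pos hx, lt_max_iff]
    tauto
  · simp [polarize, polarizeSet, hx]

theorem polarizeSet_inter (hL : ∀ x, m.reflect x ∈ L ↔ x ∈ L) :
    m.polarizeSet (A ∩ L) = m.polarizeSet A ∩ L := by
  ext x
  have := hL x
  simp only [polarizeSet, Set.mem_ofPred_eq, Set.mem_inter_iff]
  tauto

theorem side_of_mem_polarizeSet_sdiff (hx : x ∈ m.polarizeSet A \ A) : x ∈ m.side := by
  simp only [polarizeSet, Set.mem_sdiff, Set.mem_ofPred_eq] at hx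
  tauto

theorem reflect_mem_sdiff_polarizeSet (hx : x ∈ m.polarizeSet A \ A) :
    m.reflect x ∈ A \ m.polarizeSet A := by
  have hside := side_of_mem_polarizeSet_sdiff hx
  rw [Set.mem_sdiff, mem_polarizeSet_of_mem_side hside] at hx
  rw [Set.mem_sdiff, reflect_mem_polarizeSet hside]
  tauto

theorem reflect_mem_polarizeSet_sdiff (hx : x ∈ A \ m.polarizeSet A) :
    m.reflect x ∈ m.polarizeSet A \ A := by
  have hwall := m.involutive x
  have hside := m.mem_side_or x
  simp only [polarizeSet, Set.mem_sdiff, Set.mem_ofPred_eq] at hx ⊢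
  grind

theorem image_reflect_sdiff (m : Mirror α) (A : Set α) :
    m.reflect '' (A \ m.polarizeSet A) = m.polarizeSet A \ A := by
  refine Set.Subset.antisymm (Set.image_subset_iff.2 fun x => reflect_mem_polarizeSet_sdiff)
    fun x hx => ⟨m.reflect x, reflect_mem_sdiff_polarizeSet hx, m.involutive x⟩

theorem encard_polarizeSet (m : Mirror α) (A : Set α) :
    (m.polarizeSet A).encard = A.encard := by
  rw [← Set.encard_sdiff_add_encard_inter, ← image_reflect_sdiff,
    m.involutive.injective.encard_image, Set.inter_comm, Set.encard_sdiff_add_encard_inter]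

theorem polarizeSet_eq_self (hA : ∀ x ∈ m.side, m.reflect x ∈ A → x ∈ A) :
    m.polarizeSet A = A := by
  ext x
  have hwall := m.involutive x
  have hside := m.mem_side_or x
  simp only [polarizeSet, Set.mem_ofPred_eq]
  grind

theorem mem_of_reflect_mem (hA : m.polarizeSet A = A) (hx : x ∈ m.side) (hxA : m.reflect x ∈ A) :
    x ∈ A :=
  hA ▸ (mem_polarizeSet_of_mem_side hx).2 (Or.inr hxA)

theorem exists_lt_reflect_of_polarize_ne (hu : m.polarize u ≠ u) :
    ∃ x ∈ m.side, u x < u (m.reflect x) := by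
  contrapose! hu
  ext x
  rcases m.mem_side_or x with hx | hx
  · rw [polarize_of_mem_side hx, max_eq_left (hu x hx)]
  · have hmin := polarize_reflect (u := u) hx
    have hle := hu _ hx
    rw [m.involutive] at hmin hle
    rw [hmin, min_eq_right hle]

end Mirror

/-! ### Polarization increases the energy -/

section Supermodular

variable {G : NNReal → NNReal → NNReal} {s s' t t' a b : NNReal}

theorem Supermodular.cross_le (hG : Supermodular G) (hs : s ≤ s') (ht : t ≤ t') :
    G s' t + G s t' ≤ G s' t' + G s t := by
  obtain ⟨s₀, rfl⟩ := exists_add_of_le hs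
  obtain ⟨t₀, rfl⟩ := exists_add_of_le ht
  exact hG s t s₀ t₀

theorem StrictlySupermodular.supermodular (hG : StrictlySupermodular G) : Supermodular G := by
  intro s t s₀ t₀
  rcases eq_zero_or_pos s₀ with rfl | hs
  · simp [add_comm]
  rcases eq_zero_or_pos t₀ with rfl | ht
  · simp
  exact (hG s t s₀ t₀ hs ht).le

theorem StrictlySupermodular.cross_lt (hG : StrictlySupermodular G) (hs : s < s') (ht : t < t') :
    G s' t + G s t' < G s' t' + G s t := by
  obtain ⟨s₀, hs₀, rfl⟩ := exists_pos_add_of_lt' hs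
  obtain ⟨t₀, ht₀, rfl⟩ := exists_pos_add_of_lt' ht
  exact hG s t s₀ t₀ hs₀ ht₀

theorem Supermodular.four_point_le (hG : Supermodular G) (hab : b ≤ a) (s s' t t' : NNReal) :
    (G s t + G s' t') * a + (G s t' + G s' t) * b ≤
      (G (max s s') (max t t') + G (min s s') (min t t')) * a +
        (G (max s s') (min t t') + G (min s s') (max t t')) * b := by
  rcases le_total s s' with hs | hs <;> rcases le_total t t' with ht | ht <;>
    simp only [hs, ht, max_eq_left, max_eq_right, min_eq_left, min_eq_right]
  · exact le_of_eq (by ring)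
  · linarith [mul_add_mul_le_mul_add_mul (hG.cross_le hs ht) hab]
  · linarith [mul_add_mul_le_mul_add_mul (hG.cross_le hs ht) hab]
  · exact le_rfl

theorem StrictlySupermodular.four_point_lt (hG : StrictlySupermodular G) (hab : b < a)
    (hs : s' < s) (ht : t < t') :
    (G s t + G s' t') * a + (G s t' + G s' t) * b <
      (G (max s s') (max t t') + G (min s s') (min t t')) * a +
        (G (max s s') (min t t') + G (min s s') (max t t')) * b := by
  rw [max_eq_left hs.le, max_eq_right ht.le, min_eq_right hs.le, min_eq_left ht.le]
  linarith [mul_add_mul_lt_mul_add_mul (hG.cross_lt hs ht) hab]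

end Supermodular

section Energy

variable {α : Type*}

/-- The functional `∑ G(u(x), v(y)) K(x, y)` of the Riesz inequality, for an interaction kernel `K`
on an arbitrary set. -/
def energy (G : NNReal → NNReal → NNReal) (K : α → α → NNReal) (u v : α → NNReal) : ENNReal :=
  ∑' (x : α) (y : α), ((G (u x) (v y) * K x y : NNReal) : ENNReal)

namespace Mirror

/-- The kernels whose energy is increased by polarization: they are invariant under the reflection
and not increased by moving one of two points to the other side of the wall. -/
structure Favors (m : Mirror α) (K : α → α → NNReal) : Prop where
  reflect_reflect : ∀ x y, K (m.reflect x) (m.reflect y) = K x y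
  reflect_le : ∀ x ∈ m.side, ∀ y ∈ m.side, K x (m.reflect y) ≤ K x y

/-- The sum of `F` over the images of `(x, y)` when each coordinate is reflected or not. -/
def orbitSum (m : Mirror α) (F : α → α → NNReal) (x y : α) : NNReal :=
  F x y + F (m.reflect x) (m.reflect y) + (F x (m.reflect y) + F (m.reflect x) y)

variable {m : Mirror α} {F F' : α → α → NNReal} {x y : α}

theorem orbitSum_reflect_left : m.orbitSum F (m.reflect x) y = m.orbitSum F x y := by
  simp only [orbitSum, m.involutive x]
  ring

theorem orbitSum_reflect_right : m.orbitSum F x (m.reflect y) = m.orbitSum F x y := by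
  simp only [orbitSum, m.involutive y]
  ring

theorem orbitSum_le_orbitSum
    (hF : ∀ x ∈ m.side, ∀ y ∈ m.side, m.orbitSum F x y ≤ m.orbitSum F' x y) (x y : α) :
    m.orbitSum F x y ≤ m.orbitSum F' x y := by
  rcases m.mem_side_or x with hx | hx <;> rcases m.mem_side_or y with hy | hy <;>
    simpa only [orbitSum_reflect_left, orbitSum_reflect_right] using hF _ hx _ hy

theorem tsum_orbitSum (m : Mirror α) (F : α → α → NNReal) :
    ∑' p : α × α, (m.orbitSum F p.1 p.2 : ENNReal) = 4 * ∑' (x) (y), (F x y : ENNReal) := by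
  have hleft (f : α → ENNReal) : ∑' x, f (m.reflect x) = ∑' x, f x :=
    (Equiv.ofBijective _ m.involutive.bijective).tsum_eq f
  simp only [ENNReal.tsum_prod', orbitSum, ENNReal.coe_add, ENNReal.tsum_add]
  have hright (x : α) : ∑' y, (F x (m.reflect y) : ENNReal) = ∑' y, (F x y : ENNReal) :=
    hleft fun y => (F x y : ENNReal)
  simp only [hright, hleft fun x => ∑' y, (F x y : ENNReal)]
  ring

variable {G : NNReal → NNReal → NNReal} {K : α → α → NNReal} {u v : α → NNReal}

theorem four_mul_energy (m : Mirror α) (G : NNReal → NNReal → NNReal) (K : α → α → NNReal)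
    (u v : α → NNReal) :
    4 * energy G K u v =
      ∑' p : α × α, (m.orbitSum (fun x y => G (u x) (v y) * K x y) p.1 p.2 : ENNReal) :=
  (tsum_orbitSum m _).symm

theorem Favors.orbitSum_eq (hK : m.Favors K) (x y : α) :
    m.orbitSum (fun x y => G (u x) (v y) * K x y) x y =
      (G (u x) (v y) + G (u (m.reflect x)) (v (m.reflect y))) * K x y +
        (G (u x) (v (m.reflect y)) + G (u (m.reflect x)) (v y)) * K x (m.reflect y) := by
  have hswap : K (m.reflect x) y = K x (m.reflect y) := by
    rw [← hK.reflect_reflect x, m.involutive]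
  rw [orbitSum, hK.reflect_reflect, hswap]
  ring

theorem Favors.orbitSum_polarize_eq (hK : m.Favors K) (hx : x ∈ m.side) (hy : y ∈ m.side) :
    m.orbitSum (fun x y => G (m.polarize u x) (m.polarize v y) * K x y) x y =
      (G (max (u x) (u (m.reflect x))) (max (v y) (v (m.reflect y))) +
        G (min (u x) (u (m.reflect x))) (min (v y) (v (m.reflect y)))) * K x y +
      (G (max (u x) (u (m.reflect x))) (min (v y) (v (m.reflect y))) +
        G (min (u x) (u (m.reflect x))) (max (v y) (v (m.reflect y)))) * K x (m.reflect y) := by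
  rw [hK.orbitSum_eq, polarize_of_mem_side hx, polarize_of_mem_side hy, polarize_reflect hx,
    polarize_reflect hy]

theorem Favors.orbitSum_le (hK : m.Favors K) (hG : Supermodular G) (x y : α) :
    m.orbitSum (fun x y => G (u x) (v y) * K x y) x y ≤
      m.orbitSum (fun x y => G (m.polarize u x) (m.polarize v y) * K x y) x y := by
  refine orbitSum_le_orbitSum (fun x hx y hy => ?_) x y
  rw [hK.orbitSum_eq, hK.orbitSum_polarize_eq hx hy]
  exact hG.four_point_le (hK.reflect_le x hx y hy) _ _ _ _

theorem Favors.energy_le_energy_polarize (hK : m.Favors K) (hG : Supermodular G) :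
    energy G K u v ≤ energy G K (m.polarize u) (m.polarize v) := by
  rw [← ENNReal.mul_le_mul_iff_right four_ne_zero ENNReal.ofNat_ne_top,
    four_mul_energy m, four_mul_energy m]
  exact ENNReal.tsum_le_tsum fun p => ENNReal.coe_le_coe.2 (hK.orbitSum_le hG p.1 p.2)

theorem Favors.energy_lt_energy_polarize (hK : m.Favors K) (hG : StrictlySupermodular G)
    (hx : x ∈ m.side) (hy : y ∈ m.side) (hKxy : K x (m.reflect y) < K x y)
    (hu : u (m.reflect x) < u x) (hv : v y < v (m.reflect y))
    (hfin : energy G K (m.polarize u) (m.polarize v) < ⊤) :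
    energy G K u v < energy G K (m.polarize u) (m.polarize v) := by
  have hle := hK.energy_le_energy_polarize (u := u) (v := v) hG.supermodular
  rw [← ENNReal.mul_lt_mul_iff_right four_ne_zero ENNReal.ofNat_ne_top,
    four_mul_energy m, four_mul_energy m]
  refine ENNReal.tsum_lt_tsum (i := (x, y)) ?_
    (fun p => ENNReal.coe_le_coe.2 (hK.orbitSum_le hG.supermodular p.1 p.2))
    (ENNReal.coe_lt_coe.2 ?_)
  · rw [← four_mul_energy]
    exact ENNReal.mul_ne_top ENNReal.ofNat_ne_top (hle.trans_lt hfin).ne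
  · rw [hK.orbitSum_eq, hK.orbitSum_polarize_eq hx hy]
    exact hG.four_point_lt hKxy hu hv

end Mirror

end Energy

/-! ### Cutoffs -/

section Cutoff

variable {α : Type*} {u v f g : α → NNReal} {t : NNReal}

theorem eq_of_superlevel_eq (h : ∀ t, {x | t < f x} = {x | t < g x}) : f = g :=
  funext fun x => eq_of_forall_lt_iff fun t => Set.ext_iff.1 (h t) x

/-- The cutoff of a function at height `t`, which discards the values `≤ t`. The remaining values
are not lowered by `t`, since `G` need not be monotone. -/
def cutoff (t : NNReal) (u : α → NNReal) : α → NNReal := fun x => if t < u x then u x else 0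

theorem superlevel_cutoff (s t : NNReal) (u : α → NNReal) :
    {x | s < cutoff t u x} = {x | max s t < u x} := by
  ext x
  by_cases h : t < u x <;> simp [cutoff, h]

theorem Admissible.cutoff (hu : Admissible u) (t : NNReal) : Admissible (cutoff t u) := by
  intro s hs
  rw [superlevel_cutoff]
  exact hu _ (lt_max_of_lt_left hs)

theorem cutoff_eq_cutoff_iff :
    cutoff t f = cutoff t g ↔ ∀ s, {x | max s t < f x} = {x | max s t < g x} := by
  simp only [← superlevel_cutoff]
  exact ⟨fun h s => by rw [h], eq_of_superlevel_eq⟩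

theorem eventually_cutoff_apply_eq (u : α → NNReal) (x : α) :
    ∀ᶠ t in 𝓝[>] 0, cutoff t u x = u x := by
  rcases eq_zero_or_pos (u x) with hx | hx
  · exact .of_forall fun t => by simp [cutoff, hx]
  · filter_upwards [nhdsWithin_le_nhds (eventually_lt_nhds hx)] with t ht
    exact if_pos ht

variable {G : NNReal → NNReal → NNReal} {K : α → α → NNReal} {u' v' : α → NNReal}

theorem Supermodular.apply_cutoff_le (hG : Supermodular G) (hG0 : G 0 0 = 0) (x y : α) :
    G (cutoff t u x) (cutoff t v y) ≤ G (u x) (v y) := by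
  have hbase : G (u x) 0 + G 0 (v y) ≤ G (u x) (v y) := by
    simpa [hG0] using hG 0 0 (u x) (v y)
  unfold cutoff
  split_ifs
  · exact le_rfl
  · exact le_self_add.trans hbase
  · exact le_add_self.trans hbase
  · simp [hG0]

theorem energy_cutoff_le (hG : Supermodular G) (hG0 : G 0 0 = 0) :
    energy G K (cutoff t u) (cutoff t v) ≤ energy G K u v :=
  ENNReal.tsum_le_tsum fun x => ENNReal.tsum_le_tsum fun y =>
    ENNReal.coe_le_coe.2 (mul_le_mul_left (hG.apply_cutoff_le hG0 x y) _)

theorem energy_le_of_forall_cutoff (hG : Supermodular G) (hG0 : G 0 0 = 0)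
    (h : ∀ t > 0, energy G K (cutoff t u) (cutoff t v) ≤ energy G K (cutoff t u') (cutoff t v')) :
    energy G K u v ≤ energy G K u' v' := by
  rw [energy, ← ENNReal.tsum_prod, ENNReal.tsum_eq_iSup_sum]
  refine iSup_le fun s => ?_
  have hev : ∀ᶠ t in 𝓝[>] (0 : NNReal), ∀ p ∈ s,
      cutoff t u p.1 = u p.1 ∧ cutoff t v p.2 = v p.2 :=
    (Finset.eventually_all s).2 fun p _ =>
      (eventually_cutoff_apply_eq u p.1).and (eventually_cutoff_apply_eq v p.2)
  obtain ⟨t, hts, ht⟩ := (hev.and self_mem_nhdsWithin).exists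
  calc ∑ p ∈ s, ((G (u p.1) (v p.2) * K p.1 p.2 : NNReal) : ENNReal)
      = ∑ p ∈ s, ((G (cutoff t u p.1) (cutoff t v p.2) * K p.1 p.2 : NNReal) : ENNReal) :=
        Finset.sum_congr rfl fun p hp => by rw [(hts p hp).1, (hts p hp).2]
    _ ≤ energy G K (cutoff t u) (cutoff t v) := by
        rw [energy, ← ENNReal.tsum_prod]
        exact ENNReal.sum_le_tsum s
    _ ≤ energy G K (cutoff t u') (cutoff t v') := h t ht
    _ ≤ energy G K u' v' := energy_cutoff_le hG hG0

end Cutoff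

/-! ### Potentials and stabilization -/

section Potential

variable {α : Type*} {ψ : Set α → ℕ} {A B C : Set α}

/-- `B` is finite, and it equals `A` unless it has a smaller potential. -/
def Improves (ψ : Set α → ℕ) (A B : Set α) : Prop :=
  B.Finite ∧ (B = A ∨ ψ B < ψ A)

theorem Improves.trans (hAB : Improves ψ A B) (hBC : Improves ψ B C) : Improves ψ A C := by
  obtain ⟨-, rfl | hAB⟩ := hAB
  · exact hBC
  · obtain ⟨hC, rfl | hBC⟩ := hBC
    exacts [⟨hC, Or.inr hAB⟩, ⟨hC, Or.inr (hBC.trans hAB)⟩]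

theorem Improves.antisymm (hAB : Improves ψ A B) (hBA : Improves ψ B A) : B = A := by
  rcases hAB.2 with h | hAB
  · exact h
  · rcases hBA.2 with h | hBA
    exacts [h.symm, absurd hBA hAB.asymm]

/-- The total weight of a set, for a weight function on its points. -/
def weight (φ : α → ℕ) (A : Set α) : ℕ := ∑ᶠ x ∈ A, φ x

theorem Mirror.improves_polarizeSet {m : Mirror α} {φ : α → ℕ}
    (hφ : ∀ x ∈ m.side, m.reflect x ≠ x → φ x < φ (m.reflect x)) (hA : A.Finite) :
    Improves (weight φ) A (m.polarizeSet A) := by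
  have hfin : (m.polarizeSet A).Finite := by
    rwa [← Set.encard_lt_top_iff, m.encard_polarizeSet, Set.encard_lt_top_iff]
  have hdrop : ∀ x ∈ A \ m.polarizeSet A, φ (m.reflect x) < φ x := by
    intro x hx
    have hx' := m.reflect_mem_polarizeSet_sdiff hx
    have hne : x ≠ m.reflect x := fun h => hx'.2 (h ▸ hx.1)
    simpa only [m.involutive x] using
      hφ _ (side_of_mem_polarizeSet_sdiff hx') (by rwa [m.involutive x])
  refine ⟨hfin, or_iff_not_imp_left.2 fun hne => ?_⟩
  have hmoved : (A \ m.polarizeSet A).Nonempty := by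
    by_contra hempty
    rw [Set.not_nonempty_iff_eq_empty] at hempty
    have himage := m.image_reflect_sdiff A
    rw [hempty, Set.image_empty, eq_comm, Set.sdiff_eq_empty] at himage
    exact hne (himage.antisymm (Set.sdiff_eq_empty.1 hempty))
  calc weight φ (m.polarizeSet A)
      = ∑ᶠ x ∈ m.polarizeSet A ∩ A, φ x + ∑ᶠ x ∈ A \ m.polarizeSet A, φ (m.reflect x) := by
        rw [weight, ← finsum_mem_inter_add_sdiff A hfin, ← m.image_reflect_sdiff,
          finsum_mem_image m.involutive.injective.injOn]
    _ < ∑ᶠ x ∈ m.polarizeSet A ∩ A, φ x + ∑ᶠ x ∈ A \ m.polarizeSet A, φ x := by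
        have hD : (A \ m.polarizeSet A).Finite := hA.sdiff
        rw [finsum_mem_eq_finite_toFinset_sum _ hD, finsum_mem_eq_finite_toFinset_sum _ hD]
        refine Nat.add_lt_add_left (Finset.sum_lt_sum_of_nonempty ?_ fun x hx => ?_) _
        · exact hD.toFinset_nonempty.2 hmoved
        · exact hdrop x (hD.mem_toFinset.1 hx)
    _ = weight φ A := by
        rw [Set.inter_comm, weight, finsum_mem_inter_add_sdiff _ hA]

end Potential

section IterateSeq

variable {α β : Type*}

/-- The sequence `b`, `T 0 b`, `T 1 (T 0 b)`, … -/
def iterateSeq (T : ℕ → β → β) (b : β) : ℕ → β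
  | 0 => b
  | k + 1 => T k (iterateSeq T b k)

theorem improves_iterateSeq {ψ : Set α → ℕ} {ρ : ℕ → Set α → Set α}
    (hρ : ∀ k A, A.Finite → Improves ψ A (ρ k A)) {A : Set α} (hA : A.Finite) (k : ℕ) :
    Improves ψ A (iterateSeq ρ A k) := by
  induction k with
  | zero => exact ⟨hA, .inl rfl⟩
  | succ k ih => exact ih.trans (hρ k _ ih.1)

theorem eventuallyConst_iterateSeq {ψ : Set α → ℕ} {ρ : ℕ → Set α → Set α}
    (hρ : ∀ k A, A.Finite → Improves ψ A (ρ k A)) {A : Set α} (hA : A.Finite) :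
    EventuallyConst (iterateSeq ρ A) atTop := by
  let N := Function.argmin fun k => ψ (iterateSeq ρ A k)
  refine eventuallyConst_atTop.2 ⟨N, fun k hk => ?_⟩
  induction k, hk using Nat.le_induction with
  | base => rfl
  | succ k _ ih =>
    rcases (hρ k _ (improves_iterateSeq hρ hA k).1).2 with heq | hlt
    · exact heq.trans ih
    · have hmin : ψ (iterateSeq ρ A N) ≤ ψ (iterateSeq ρ A (k + 1)) :=
        Function.argmin_le (fun k => ψ (iterateSeq ρ A k)) (k + 1)
      rw [← ih] at hmin
      exact absurd hlt hmin.not_gt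

end IterateSeq

/-! ### Operators acting on superlevel sets -/

/-- The operator `T` on functions acts on superlevel sets through the set operator `ρ`, which never
increases the potential `ψ` and fixes the finite sets whose potential it preserves. -/
structure IsLevelwise {α : Type*} (ψ : Set α → ℕ) (T : (α → NNReal) → α → NNReal)
    (ρ : Set α → Set α) : Prop where
  superlevel : ∀ u, Admissible u → ∀ t, {x | t < T u x} = ρ {x | t < u x}
  improves : ∀ A : Set α, A.Finite → Improves ψ A (ρ A)

namespace IsLevelwise

variable {α : Type*} {ψ : Set α → ℕ}

section Single

variable {T T' : (α → NNReal) → α → NNReal} {ρ ρ' : Set α → Set α} {u : α → NNReal}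

theorem admissible (hT : IsLevelwise ψ T ρ) (hu : Admissible u) : Admissible (T u) := by
  intro t ht
  rw [hT.superlevel u hu]
  exact (hT.improves _ (hu t ht)).1

theorem apply_cutoff (hT : IsLevelwise ψ T ρ) (hu : Admissible u) (t : NNReal) :
    T (cutoff t u) = cutoff t (T u) :=
  eq_of_superlevel_eq fun s => by
    rw [hT.superlevel _ (hu.cutoff t), superlevel_cutoff, superlevel_cutoff, hT.superlevel u hu]

theorem comp (hT : IsLevelwise ψ T ρ) (hT' : IsLevelwise ψ T' ρ') :
    IsLevelwise ψ (T ∘ T') (ρ ∘ ρ') where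
  superlevel u hu t := by
    simp only [Function.comp_apply, hT.superlevel _ (hT'.admissible hu), hT'.superlevel u hu]
  improves A hA := (hT'.improves A hA).trans (hT.improves _ (hT'.improves A hA).1)

end Single

variable {T : ℕ → (α → NNReal) → α → NNReal} {ρ : ℕ → Set α → Set α} {u v : α → NNReal}

theorem admissible_iterateSeq (hT : ∀ k, IsLevelwise ψ (T k) (ρ k)) (hu : Admissible u) (k : ℕ) :
    Admissible (iterateSeq T u k) := by
  induction k with
  | zero => exact hu
  | succ k ih => exact (hT k).admissible ih

theorem superlevel_iterateSeq (hT : ∀ k, IsLevelwise ψ (T k) (ρ k)) (hu : Admissible u)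
    (t : NNReal) (k : ℕ) : {x | t < iterateSeq T u k x} = iterateSeq ρ {x | t < u x} k := by
  induction k with
  | zero => rfl
  | succ k ih =>
    rw [iterateSeq, (hT k).superlevel _ (admissible_iterateSeq hT hu k), ih, iterateSeq]

theorem iterateSeq_cutoff (hT : ∀ k, IsLevelwise ψ (T k) (ρ k)) (hu : Admissible u) (t : NNReal)
    (k : ℕ) : iterateSeq T (cutoff t u) k = cutoff t (iterateSeq T u k) := by
  induction k with
  | zero => rfl
  | succ k ih =>
    rw [iterateSeq, ih, (hT k).apply_cutoff (admissible_iterateSeq hT hu k), iterateSeq]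

theorem eventuallyConst_cutoff_iterateSeq (hT : ∀ k, IsLevelwise ψ (T k) (ρ k))
    (hu : Admissible u) {t : NNReal} (ht : 0 < t) :
    EventuallyConst (fun k => cutoff t (iterateSeq T u k)) atTop := by
  have hlevels : ∀ᶠ k in atTop, ∀ A ∈ {A | A ⊆ {x | t < u x}},
      iterateSeq ρ A (k + 1) = iterateSeq ρ A k := by
    refine (eventually_all_finite (hu t ht).finite_subsets).2 fun A hA => ?_
    exact eventually_atTop.2 (eventuallyConst_atTop_nat.1
      (eventuallyConst_iterateSeq (fun k => (hT k).improves) ((hu t ht).subset hA)))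
  refine eventuallyConst_atTop_nat.2 (eventually_atTop.1 (hlevels.mono fun k hk => ?_))
  refine cutoff_eq_cutoff_iff.2 fun s => ?_
  rw [superlevel_iterateSeq hT hu, superlevel_iterateSeq hT hu]
  exact hk _ fun x hx => (le_max_right s t).trans_lt hx

end IsLevelwise

section StabilizesTo

variable {α : Type*}

/-- The convergence of a sequence of functions in which the part above each positive height is
eventually constant. -/
def StabilizesTo (w : ℕ → α → NNReal) (f : α → NNReal) : Prop :=
  ∀ t > 0, ∀ᶠ k in atTop, cutoff t (w k) = cutoff t f

theorem eq_of_forall_cutoff_eq {f g : α → NNReal} (h : ∀ t > 0, cutoff t f = cutoff t g) :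
    f = g := by
  ext1 x
  obtain ⟨t, ⟨hf, hg⟩, ht⟩ := (((eventually_cutoff_apply_eq f x).and
    (eventually_cutoff_apply_eq g x)).and self_mem_nhdsWithin).exists
  rw [← hf, ← hg, h t ht]

theorem exists_tendsto_of_eventuallyConst_cutoff {a : ℕ → NNReal}
    (ha : ∀ t > 0, EventuallyConst (cutoff t a) atTop) :
    ∃ l, Tendsto a atTop (𝓝 l) ∧ ∀ t > 0, ∀ᶠ k in atTop, cutoff t a k = if t < l then l else 0 := by
  by_cases hsmall : ∀ t > 0, ∀ᶠ k in atTop, a k ≤ t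
  · refine ⟨0, ?_, fun t ht => ?_⟩
    · refine tendsto_order.2 ⟨fun b hb => absurd hb not_lt_zero, fun b hb => ?_⟩
      obtain ⟨c, hc0, hcb⟩ := exists_between hb
      exact (hsmall c hc0).mono fun k hk => hk.trans_lt hcb
    · filter_upwards [hsmall t ht] with k hk
      simp [cutoff, hk]
  · push Not at hsmall
    obtain ⟨s, hs, hfreq⟩ := hsmall
    obtain ⟨N, hN⟩ := eventuallyConst_atTop.1 (ha s hs)
    obtain ⟨M, hsM, hNM⟩ := (hfreq.and_eventually (eventually_ge_atTop N)).exists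
    have hconst : ∀ᶠ k in atTop, a k = a M := by
      filter_upwards [eventually_ge_atTop N] with k hk
      have hcut := (hN k hk).trans (hN M hNM).symm
      simp only [cutoff, hsM, if_true] at hcut
      split_ifs at hcut with h
      · exact hcut
      · exact absurd hcut (hs.trans hsM).ne
    refine ⟨a M, tendsto_nhds_of_eventually_eq hconst, fun t _ => ?_⟩
    filter_upwards [hconst] with k hk
    rw [cutoff, hk]

theorem stabilizesTo_limUnder {w : ℕ → α → NNReal}
    (hw : ∀ t > 0, EventuallyConst (fun k => cutoff t (w k)) atTop) :
    StabilizesTo w fun x => limUnder atTop fun k => w k x := by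
  intro t ht
  obtain ⟨N, hN⟩ := eventuallyConst_atTop.1 (hw t ht)
  filter_upwards [eventually_ge_atTop N] with k hk
  rw [hN k hk]
  ext1 x
  obtain ⟨l, hl, hcut⟩ := exists_tendsto_of_eventuallyConst_cutoff (a := fun k => w k x)
    fun t ht => (hw t ht).comp fun f => f x
  obtain ⟨j, hj, hNj⟩ := ((hcut t ht).and (eventually_ge_atTop N)).exists
  rw [← hN j hNj]
  simp only [cutoff, hl.limUnder_eq]
  exact hj

theorem StabilizesTo.admissible {w : ℕ → α → NNReal} {f : α → NNReal} (hwf : StabilizesTo w f)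
    (hw : ∀ k, Admissible (w k)) : Admissible f := by
  intro t ht
  obtain ⟨k, hk⟩ := (hwf t ht).exists
  have hlevel := cutoff_eq_cutoff_iff.1 hk 0
  rw [max_eq_right ht.le] at hlevel
  exact hlevel ▸ hw k t ht

variable {ψ : Set α → ℕ} {T : ℕ → (α → NNReal) → α → NNReal} {ρ : ℕ → Set α → Set α}
  {u v u' v' : α → NNReal} {G : NNReal → NNReal → NNReal} {K : α → α → NNReal}

theorem StabilizesTo.apply_eq_of_frequently (hu' : StabilizesTo (iterateSeq T u) u')
    (hT : ∀ k, IsLevelwise ψ (T k) (ρ k)) (hu : Admissible u)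
    {S : (α → NNReal) → α → NNReal} (hS : ∃ᶠ k in atTop, T k = S) : S u' = u' := by
  have hadm := IsLevelwise.admissible_iterateSeq hT hu
  obtain ⟨j, rfl⟩ := hS.exists
  have hu'adm := hu'.admissible hadm
  refine eq_of_forall_cutoff_eq fun t ht => ?_
  obtain ⟨k, hk, hcut, hcut'⟩ := (hS.and_eventually
    ((hu' t ht).and ((tendsto_add_atTop_nat 1).eventually (hu' t ht)))).exists
  calc cutoff t (T j u') = T j (cutoff t (iterateSeq T u k)) := by
        rw [← (hT j).apply_cutoff hu'adm, hcut]
    _ = cutoff t (iterateSeq T u (k + 1)) := by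
        rw [(hT j).apply_cutoff (hadm k), iterateSeq, hk]
    _ = cutoff t u' := hcut'

theorem energy_iterateSeq_mono (hmono : ∀ k u v, Admissible u → Admissible v →
      energy G K u v ≤ energy G K (T k u) (T k v))
    (hT : ∀ k, IsLevelwise ψ (T k) (ρ k)) (hu : Admissible u) (hv : Admissible v) :
    Monotone fun k => energy G K (iterateSeq T u k) (iterateSeq T v k) :=
  monotone_nat_of_le_succ fun k => hmono k _ _ (IsLevelwise.admissible_iterateSeq hT hu k)
    (IsLevelwise.admissible_iterateSeq hT hv k)

theorem StabilizesTo.energy_iterateSeq_le (hu' : StabilizesTo (iterateSeq T u) u')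
    (hv' : StabilizesTo (iterateSeq T v) v') (hmono : ∀ k u v, Admissible u → Admissible v →
      energy G K u v ≤ energy G K (T k u) (T k v))
    (hT : ∀ k, IsLevelwise ψ (T k) (ρ k)) (hu : Admissible u) (hv : Admissible v)
    (hG : Supermodular G) (hG0 : G 0 0 = 0) (j : ℕ) :
    energy G K (iterateSeq T u j) (iterateSeq T v j) ≤ energy G K u' v' := by
  refine energy_le_of_forall_cutoff hG hG0 fun t ht => ?_
  obtain ⟨k, ⟨hku, hkv⟩, hjk⟩ :=
    (((hu' t ht).and (hv' t ht)).and (eventually_ge_atTop j)).exists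
  rw [← hku, ← hkv]
  simp only [← IsLevelwise.iterateSeq_cutoff hT hu, ← IsLevelwise.iterateSeq_cutoff hT hv]
  exact energy_iterateSeq_mono hmono hT (hu.cutoff t) (hv.cutoff t) hjk

end StabilizesTo

/-! ### Reflections in the positive roots of type `B_d` -/

section Root

variable {d : ℕ}

/-- The positive roots of type `B_d`: the primitive lattice vectors on the lines spanned by the
directions in `Evec d`. -/
inductive IsPosRoot : ZLat d → Prop
  | single (i : Fin d) : IsPosRoot (Pi.single i 1)
  | pair {i j : Fin d} (hij : i < j) {s : ℤ} (hs : s = 1 ∨ s = -1) :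
      IsPosRoot (Pi.single i 1 + Pi.single j s)

/-- The vector `τ / ⟨τ, τ⟩`, half of the coroot of `τ`. These are the directions in `Evec d`. -/
def halfCoroot (τ : ZLat d) : Fin d → ℝ := fun k => τ k / (τ ⬝ᵥ τ : ℤ)

/-- The integer `2⟨τ, x⟩ / ⟨τ, τ⟩`, through which the reflection in `τ` is expressed. -/
def corootPairing (τ x : ZLat d) : ℤ := pairing (halfCoroot τ) x

/-- The reflection in the hyperplane on which the coroot pairing with `τ` equals `m`. -/
def affineReflection (τ : ZLat d) (m : ℤ) (x : ZLat d) : ZLat d :=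
  x + (m - corootPairing τ x) • τ

theorem dotProduct_self_pair {i j : Fin d} (hij : i < j) {s : ℤ} (hs : s = 1 ∨ s = -1) :
    (Pi.single i 1 + Pi.single j s : ZLat d) ⬝ᵥ (Pi.single i 1 + Pi.single j s) = 2 := by
  rcases hs with rfl | rfl <;> simp [hij.ne, hij.ne']

theorem mem_evecList_iff {e : Fin d → ℝ} :
    e ∈ EvecList d ↔ ∃ τ : ZLat d, IsPosRoot τ ∧ halfCoroot τ = e := by
  have single (i : Fin d) : halfCoroot (Pi.single i 1 : ZLat d) = stdVec d i := by
    ext k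
    simp [halfCoroot, stdVec, Pi.single_apply]
  have pair {i j : Fin d} (hij : i < j) {s : ℤ} (hs : s = 1 ∨ s = -1) :
      halfCoroot (Pi.single i 1 + Pi.single j s) =
        fun k => (stdVec d i k + s * stdVec d j k) / 2 := by
    ext k
    simp [halfCoroot, dotProduct_self_pair hij hs, stdVec, Pi.single_apply]
  simp only [EvecList, List.mem_append, List.mem_map, List.mem_flatMap, List.mem_filterMap,
    List.mem_finRange, true_and, Option.ite_none_right_eq_some, Option.some_inj]
  constructor
  · rintro ((⟨i, rfl⟩ | ⟨i, j, hij, rfl⟩) | ⟨i, j, hij, rfl⟩)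
    · exact ⟨_, .single i, single i⟩
    · exact ⟨_, .pair hij (.inl rfl), by simp [pair hij (.inl rfl)]⟩
    · exact ⟨_, .pair hij (.inr rfl), by simp [pair hij (.inr rfl), sub_eq_add_neg]⟩
  · rintro ⟨_, ⟨i⟩ | ⟨hij, rfl | rfl⟩, rfl⟩
    · exact .inl (.inl ⟨i, (single i).symm⟩)
    · exact .inl (.inr ⟨_, _, hij, by simp [pair hij (.inl rfl)]⟩)
    · exact .inr ⟨_, _, hij, by simp [pair hij (.inr rfl), sub_eq_add_neg]⟩

namespace IsPosRoot

variable {τ : ZLat d} {x y : ZLat d} {m : ℤ}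

theorem dotProduct_self (hτ : IsPosRoot τ) : τ ⬝ᵥ τ = 1 ∨ τ ⬝ᵥ τ = 2 := by
  cases hτ with
  | single i => simp
  | pair hij hs => exact .inr (dotProduct_self_pair hij hs)

theorem dotProduct_self_pos (hτ : IsPosRoot τ) : 0 < τ ⬝ᵥ τ := by
  rcases hτ.dotProduct_self with h | h <;> simp [h]

theorem exists_apply_eq_one (hτ : IsPosRoot τ) : ∃ i, τ i = 1 := by
  cases hτ with
  | single i => exact ⟨i, by simp⟩
  | @pair i j hij s hs => exact ⟨i, by simp [hij.ne]⟩

theorem corootPairing_mul (hτ : IsPosRoot τ) (x : ZLat d) :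
    corootPairing τ x * (τ ⬝ᵥ τ) = 2 * (τ ⬝ᵥ x) := by
  have hsum : ∑ i, halfCoroot τ i * (x i : ℝ) = (τ ⬝ᵥ x : ℤ) / (τ ⬝ᵥ τ : ℤ) := by
    simp only [halfCoroot, div_mul_eq_mul_div, ← Finset.sum_div]
    simp [dotProduct]
  rw [corootPairing, pairing, hsum]
  rcases hτ.dotProduct_self with h | h
  · rw [h, Int.cast_one, div_one, mul_one]
    exact_mod_cast Int.floor_intCast (R := ℝ) (2 * (τ ⬝ᵥ x))
  · rw [h, Int.cast_ofNat, mul_div_cancel₀ _ two_ne_zero, Int.floor_intCast, mul_comm]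

theorem corootPairing_add_smul (hτ : IsPosRoot τ) (x : ZLat d) (k : ℤ) :
    corootPairing τ (x + k • τ) = corootPairing τ x + 2 * k := by
  refine mul_right_cancel₀ hτ.dotProduct_self_pos.ne' ?_
  rw [add_mul, hτ.corootPairing_mul, hτ.corootPairing_mul, dotProduct_add, dotProduct_smul,
    smul_eq_mul]
  ring

theorem sameLine_iff (hτ : IsPosRoot τ) :
    sameLine (halfCoroot τ) x y ↔ ∃ k : ℤ, y = x + k • τ := by
  have hnorm : ((τ ⬝ᵥ τ : ℤ) : ℝ) ≠ 0 := by exact_mod_cast hτ.dotProduct_self_pos.ne'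
  constructor
  · rintro ⟨c, hc⟩
    obtain ⟨i, hi⟩ := hτ.exists_apply_eq_one
    have hcoord (k : Fin d) : (x k : ℝ) - y k = c / (τ ⬝ᵥ τ : ℤ) * τ k := by
      simpa [halfCoroot, div_mul_eq_mul_div, mul_div_assoc] using congrFun hc k
    have hscale : c / (τ ⬝ᵥ τ : ℤ) = x i - y i := by simp [hcoord i, hi]
    refine ⟨y i - x i, funext fun k => ?_⟩
    have hk := hcoord k
    rw [hscale] at hk
    rw [Pi.add_apply, Pi.smul_apply, smul_eq_mul]
    rify
    linarith
  · rintro ⟨k, rfl⟩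
    refine ⟨-k * (τ ⬝ᵥ τ : ℤ), funext fun i => ?_⟩
    simp only [halfCoroot, Pi.add_apply, Pi.smul_apply, smul_eq_mul]
    push_cast
    field_simp
    ring

theorem corootPairing_affineReflection (hτ : IsPosRoot τ) :
    corootPairing τ (affineReflection τ m x) = 2 * m - corootPairing τ x := by
  rw [affineReflection, hτ.corootPairing_add_smul]
  ring

theorem involutive_affineReflection (hτ : IsPosRoot τ) (m : ℤ) :
    Function.Involutive (affineReflection τ m) := by
  intro x
  rw [affineReflection, hτ.corootPairing_affineReflection, affineReflection, add_assoc, ← add_smul]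
  ring_nf

theorem affineReflection_eq_self_iff (hτ : IsPosRoot τ) :
    affineReflection τ m x = x ↔ corootPairing τ x = m := by
  constructor
  · intro h
    have := hτ.corootPairing_affineReflection (m := m) (x := x)
    rw [h] at this
    linarith
  · rintro rfl
    simp [affineReflection]

end IsPosRoot

theorem corootPairing_single (i : Fin d) (x : ZLat d) :
    corootPairing (Pi.single i 1) x = 2 * x i := by
  simpa using (IsPosRoot.single i).corootPairing_mul x

theorem corootPairing_pair {i j : Fin d} (hij : i < j) {s : ℤ} (hs : s = 1 ∨ s = -1)
    (x : ZLat d) : corootPairing (Pi.single i 1 + Pi.single j s) x = x i + s * x j := by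
  have h := (IsPosRoot.pair hij hs).corootPairing_mul x
  rw [dotProduct_self_pair hij hs, mul_comm] at h
  simpa [add_dotProduct] using h

end Root

section Distance

variable {d : ℕ} {τ : ZLat d} {m : ℤ} {x y : ZLat d}

theorem latDist_le_latDist {x y x' y' : ZLat d} (S : Finset (Fin d))
    (hS : ∑ k ∈ S, (x k - y k).natAbs ≤ ∑ k ∈ S, (x' k - y' k).natAbs)
    (hSc : ∀ k ∉ S, x k - y k = x' k - y' k) : latDist x y ≤ latDist x' y' := by
  rw [latDist, latDist, ← Finset.sum_add_sum_compl S, ← Finset.sum_add_sum_compl S]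
  refine add_le_add hS (Finset.sum_le_sum fun k hk => ?_)
  rw [hSc k (Finset.mem_compl.1 hk)]

theorem affineReflection_single_apply (i k : Fin d) :
    affineReflection (Pi.single i 1) m x k = if k = i then m - x i else x k := by
  rw [affineReflection, corootPairing_single]
  by_cases hk : k = i
  · subst hk
    simp
    ring
  · simp [hk]

theorem affineReflection_pair_apply {i j : Fin d} (hij : i < j) {s : ℤ} (hs : s = 1 ∨ s = -1)
    (k : Fin d) : affineReflection (Pi.single i 1 + Pi.single j s) m x k =
      if k = i then m - s * x j else if k = j then s * (m - x i) else x k := by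
  rw [affineReflection, corootPairing_pair hij hs]
  by_cases hki : k = i
  · subst hki
    simp [hij.ne]
    ring
  · by_cases hkj : k = j
    · subst hkj
      rcases hs with rfl | rfl <;> simp [hki] <;> ring
    · simp [hki, hkj]

namespace IsPosRoot

theorem latDist_affineReflection_le (hτ : IsPosRoot τ) (m : ℤ) (x y : ZLat d) :
    latDist (affineReflection τ m x) (affineReflection τ m y) ≤ latDist x y := by
  cases hτ with
  | single i =>
    refine latDist_le_latDist {i} ?_ fun k hk => ?_
    · simp only [Finset.sum_singleton, affineReflection_single_apply, if_true]
      omega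
    · simp_all [affineReflection_single_apply]
  | @pair i j hij s hs =>
    refine latDist_le_latDist {i, j} ?_ fun k hk => ?_
    · simp only [Finset.sum_pair hij.ne, affineReflection_pair_apply hij hs, if_true, hij.ne',
        if_false]
      rcases hs with rfl | rfl <;> omega
    · simp_all [affineReflection_pair_apply]

theorem latDist_affineReflection (hτ : IsPosRoot τ) (m : ℤ) (x y : ZLat d) :
    latDist (affineReflection τ m x) (affineReflection τ m y) = latDist x y := by
  refine (hτ.latDist_affineReflection_le m x y).antisymm ?_
  simpa only [hτ.involutive_affineReflection m _] using
    hτ.latDist_affineReflection_le m (affineReflection τ m x) (affineReflection τ m y)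

theorem latDist_le_latDist_affineReflection (hτ : IsPosRoot τ)
    (hxy : 0 ≤ (corootPairing τ x - m) * (corootPairing τ y - m)) :
    latDist x y ≤ latDist x (affineReflection τ m y) := by
  rw [mul_nonneg_iff] at hxy
  cases hτ with
  | single i =>
    rw [corootPairing_single, corootPairing_single] at hxy
    refine latDist_le_latDist {i} ?_ fun k hk => ?_
    · simp only [Finset.sum_singleton, affineReflection_single_apply, if_true]
      omega
    · simp_all [affineReflection_single_apply]
  | @pair i j hij s hs =>
    rw [corootPairing_pair hij hs, corootPairing_pair hij hs] at hxy
    refine latDist_le_latDist {i, j} ?_ fun k hk => ?_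
    · simp only [Finset.sum_pair hij.ne, affineReflection_pair_apply hij hs, if_true, hij.ne',
        if_false]
      rcases hs with rfl | rfl <;> omega
    · simp_all [affineReflection_pair_apply]

theorem exists_latDist_lt (hτ : IsPosRoot τ) (hy : corootPairing τ y ≠ m) (n : ℕ) :
    ∃ x, 0 < (corootPairing τ x - m) * (corootPairing τ y - m) ∧
      latDist x y ≤ n ∧ n < latDist x (affineReflection τ m y) := by
  obtain ⟨i, hi⟩ := hτ.exists_apply_eq_one
  obtain ⟨r, hr, hry⟩ : ∃ r : ℤ, (r = 1 ∨ r = -1) ∧ 0 < r * (corootPairing τ y - m) := by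
    rcases hy.lt_or_gt with h | h
    exacts [⟨-1, .inr rfl, by linarith⟩, ⟨1, .inl rfl, by linarith⟩]
  have hpairing : (corootPairing τ (y + Pi.single i (r * n)) - corootPairing τ y) * (τ ⬝ᵥ τ) =
      2 * (r * n) := by
    rw [sub_mul, hτ.corootPairing_mul, hτ.corootPairing_mul, dotProduct_add, dotProduct_single, hi]
    ring
  have hfar : n < r * (y i + r * n - affineReflection τ m y i) := by
    simp only [affineReflection, Pi.add_apply, Pi.smul_apply, hi, smul_eq_mul]
    rcases hr with rfl | rfl <;> linarith
  refine ⟨y + Pi.single i (r * n), ?_, ?_, ?_⟩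
  · have := hτ.dotProduct_self
    have hgrow : 0 ≤ r * (corootPairing τ (y + Pi.single i (r * n)) - corootPairing τ y) := by
      rcases this with h | h <;> rw [h] at hpairing <;> rcases hr with rfl | rfl <;> omega
    rcases hr with rfl | rfl
    · exact mul_pos (by linarith) (by linarith)
    · exact mul_pos_of_neg_of_neg (by linarith) (by linarith)
  · rw [latDist, Fintype.sum_eq_single i fun k hk => by simp [hk]]
    rcases hr with rfl | rfl <;> simp
  · refine lt_of_lt_of_le ?_ (Finset.single_le_sum (fun _ _ => Nat.zero_le _) (Finset.mem_univ i))
    simp only [Pi.add_apply, Pi.single_eq_same]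
    rcases hr with rfl | rfl <;> omega

end IsPosRoot

end Distance

section AlcoveNorm

variable {d : ℕ} {τ : ZLat d}

/-- The vector `2(d + 1)w`, for the point `w` of the open fundamental alcove with coordinates
`(d - i) / (2(d + 1))`. -/
def alcoveVector (d : ℕ) : ZLat d := fun i => d - (i : ℕ)

/-- The squared distance to the point `w` of the open fundamental alcove, scaled by `(2(d + 1))²`
to make it integral. -/
def alcoveNorm (x : ZLat d) : ℕ := ∑ i, (2 * (d + 1) * x i - alcoveVector d i).natAbs ^ 2

theorem IsPosRoot.dotProduct_alcoveVector_pos (hτ : IsPosRoot τ) : 0 < τ ⬝ᵥ alcoveVector d := by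
  cases hτ with
  | single i => simp [alcoveVector]
  | @pair i j hij s hs =>
    rcases hs with rfl | rfl <;> simp [alcoveVector] <;> omega

theorem IsPosRoot.dotProduct_alcoveVector_lt (hτ : IsPosRoot τ) :
    τ ⬝ᵥ alcoveVector d < (d + 1) * (τ ⬝ᵥ τ) := by
  cases hτ with
  | single i =>
    simp [alcoveVector]
  | @pair i j hij s hs =>
    rw [dotProduct_self_pair hij hs]
    rcases hs with rfl | rfl <;> simp [alcoveVector] <;> omega

theorem IsPosRoot.alcoveNorm_affineReflection (hτ : IsPosRoot τ) (m : ℤ) (x : ZLat d) :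
    (alcoveNorm (affineReflection τ m x) : ℤ) = alcoveNorm x +
      4 * (d + 1) * (m - corootPairing τ x) *
        ((d + 1) * (τ ⬝ᵥ τ) * m - τ ⬝ᵥ alcoveVector d) := by
  set k := m - corootPairing τ x with hk
  have hsum : (alcoveNorm (affineReflection τ m x) : ℤ) = alcoveNorm x +
      4 * (d + 1) * k *
        (2 * (d + 1) * (τ ⬝ᵥ x) - τ ⬝ᵥ alcoveVector d + (d + 1) * k * (τ ⬝ᵥ τ)) := by
    simp only [alcoveNorm, affineReflection, ← hk, dotProduct, Nat.cast_sum, Nat.cast_pow,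
      Int.natCast_natAbs, sq_abs, Finset.mul_sum, ← Finset.sum_add_distrib,
      ← Finset.sum_sub_distrib]
    refine Finset.sum_congr rfl fun i _ => ?_
    simp only [Pi.add_apply, Pi.smul_apply, smul_eq_mul]
    ring
  rw [hsum, hk]
  linear_combination (-4) * (d + 1) * (m - corootPairing τ x) * (d + 1) * hτ.corootPairing_mul x

end AlcoveNorm

section RootMirror

variable {d : ℕ} {τ : ZLat d} {x y : ZLat d}

/-- The mirror of an affine reflection in a positive root. Its half-space contains the origin, so
that the reflection never moves a point of it backwards in the spiral order. -/
def rootMirror (hτ : IsPosRoot τ) (m : ℤ) : Mirror (ZLat d) where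
  reflect := affineReflection τ m
  involutive := hτ.involutive_affineReflection m
  side := {x | m ≤ 0 ∧ m ≤ corootPairing τ x ∨ 1 ≤ m ∧ corootPairing τ x ≤ m}
  mem_side_or x := by
    simp only [Set.mem_ofPred_eq, hτ.corootPairing_affineReflection]
    omega
  reflect_eq_self x := by
    simp only [Set.mem_ofPred_eq, hτ.corootPairing_affineReflection,
      hτ.affineReflection_eq_self_iff]
    omega

theorem mem_side_rootMirror {hτ : IsPosRoot τ} {m : ℤ} : x ∈ (rootMirror hτ m).side ↔
    m ≤ 0 ∧ m ≤ corootPairing τ x ∨ 1 ≤ m ∧ corootPairing τ x ≤ m :=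
  Iff.rfl

theorem rootMirror_favors (hτ : IsPosRoot τ) (m : ℤ) {H : ℕ → NNReal} (hH : Antitone H) :
    (rootMirror hτ m).Favors fun x y => H (latDist x y) where
  reflect_reflect x y := congrArg H (hτ.latDist_affineReflection m x y)
  reflect_le x hx y hy := by
    rw [mem_side_rootMirror] at hx hy
    refine hH (hτ.latDist_le_latDist_affineReflection (mul_nonneg_iff.2 ?_))
    omega

theorem alcoveNorm_lt_of_mem_side (hτ : IsPosRoot τ) {m : ℤ} (hx : x ∈ (rootMirror hτ m).side)
    (hne : affineReflection τ m x ≠ x) : alcoveNorm x < alcoveNorm (affineReflection τ m x) := by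
  rw [Ne, hτ.affineReflection_eq_self_iff] at hne
  have hω := hτ.dotProduct_alcoveVector_pos
  have hω' := hτ.dotProduct_alcoveVector_lt
  have hnorm : 0 ≤ ((d : ℤ) + 1) * (τ ⬝ᵥ τ) := hω.le.trans hω'.le
  have hdrop : 0 < (m - corootPairing τ x) *
      ((d + 1) * (τ ⬝ᵥ τ) * m - τ ⬝ᵥ alcoveVector d) := by
    rcases mem_side_rootMirror.1 hx with ⟨hm, hmx⟩ | ⟨hm, hmx⟩
    · have := mul_nonpos_of_nonneg_of_nonpos hnorm hm
      exact mul_pos_of_neg_of_neg (by omega) (by linarith)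
    · have := le_mul_of_one_le_right hnorm hm
      exact mul_pos (by omega) (by linarith)
  have hscaled := mul_pos (show 0 < 4 * ((d : ℤ) + 1) by positivity) hdrop
  zify
  rw [hτ.alcoveNorm_affineReflection m x]
  linarith

end RootMirror

/-! ### One-step rearrangements -/

section LineRearr

variable {d : ℕ} {τ : ZLat d} {m : ℤ} {x y : ZLat d} {A B : Set (ZLat d)}

/-- The lattice points on the line with direction `τ` through `x`. -/
def latLine (τ x : ZLat d) : Set (ZLat d) := Set.range fun k : ℤ => x + k • τ

/-- The position of `x` in the spiral order `0, 1, -1, …` on its line, starting from `1`. -/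
def linePos (τ x : ZLat d) : ℕ := posIdx (corootPairing τ x)

/-- The rearrangement of a set along the lines with direction `τ`, which acts on the superlevel sets
of a function when the function is rearranged. -/
def lineRearr (τ : ZLat d) (A : Set (ZLat d)) : Set (ZLat d) :=
  {x | (linePos τ x : ℕ∞) ≤ (A ∩ latLine τ x).encard}

theorem linePos_pos (τ x : ZLat d) : 0 < linePos τ x := by
  unfold linePos posIdx
  split_ifs <;> omega

theorem self_mem_latLine (τ x : ZLat d) : x ∈ latLine τ x :=
  ⟨0, by simp⟩

theorem latLine_add_smul (τ x : ZLat d) (k : ℤ) : latLine τ (x + k • τ) = latLine τ x := by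
  have h : (fun l : ℤ => x + k • τ + l • τ) = (fun l : ℤ => x + l • τ) ∘ Equiv.addLeft k := by
    ext1 l
    simp only [Function.comp_apply, Equiv.coe_addLeft, add_smul, add_assoc]
  rw [latLine, h, (Equiv.addLeft k).surjective.range_comp, latLine]

theorem latLine_affineReflection (τ : ZLat d) (m : ℤ) (x : ZLat d) :
    latLine τ (affineReflection τ m x) = latLine τ x :=
  latLine_add_smul τ x _

theorem affineReflection_mem_latLine_iff :
    affineReflection τ m y ∈ latLine τ x ↔ y ∈ latLine τ x := by
  have hmem (z : ZLat d) : z ∈ latLine τ x ↔ latLine τ z = latLine τ x := by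
    refine ⟨?_, fun h => h ▸ self_mem_latLine τ z⟩
    rintro ⟨k, rfl⟩
    exact latLine_add_smul τ x k
  rw [hmem, hmem, latLine_affineReflection]

theorem injOn_linePos (hτ : IsPosRoot τ) (x : ZLat d) : Set.InjOn (linePos τ) (latLine τ x) := by
  rintro _ ⟨k, rfl⟩ _ ⟨l, rfl⟩ h
  simp only [linePos, hτ.corootPairing_add_smul, posIdx] at h
  have hkl : k = l := by split_ifs at h <;> omega
  rw [hkl]

theorem superlevel_stepR (hτ : IsPosRoot τ) {u : ZLat d → NNReal} (hu : Admissible u)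
    (t : NNReal) : {x | t < stepR (halfCoroot τ) u x} = lineRearr τ {x | t < u x} := by
  ext x
  let L := {y : ZLat d // sameLine (halfCoroot τ) x y}
  have hline : Set.range (Subtype.val : L → ZLat d) = latLine τ x := by
    ext y
    simp [latLine, hτ.sameLine_iff, eq_comm]
  have hadm : Admissible fun y : L => u y.1 := fun s hs =>
    (hu s hs).preimage (f := ((↑) : L → ZLat d)) Subtype.val_injective.injOn
  calc t < stepR (halfCoroot τ) u x
      ↔ (linePos τ x : ℕ∞) ≤ {y : L | t < u y.1}.encard :=
        lt_nthLargest_iff hadm (linePos_pos τ x)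
    _ ↔ x ∈ lineRearr τ {x | t < u x} := by
        rw [lineRearr, Set.mem_ofPred_eq, ← hline, ← Set.image_preimage_eq_inter_range,
          Subtype.val_injective.encard_image]
        rfl

theorem posIdx_le_posIdx_reflect_iff {m p : ℤ} :
    posIdx p ≤ posIdx (2 * m - p) ↔ m ≤ 0 ∧ m ≤ p ∨ 1 ≤ m ∧ p ≤ m := by
  unfold posIdx
  split_ifs <;> omega

theorem lineRearr_polarizeSet (hτ : IsPosRoot τ) (m : ℤ) (A : Set (ZLat d)) :
    lineRearr τ ((rootMirror hτ m).polarizeSet A) = lineRearr τ A := by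
  ext x
  rw [lineRearr, Set.mem_ofPred_eq, ← Mirror.polarizeSet_inter fun y =>
    affineReflection_mem_latLine_iff, Mirror.encard_polarizeSet]
  rfl

theorem polarizeSet_lineRearr (hτ : IsPosRoot τ) (m : ℤ) (A : Set (ZLat d)) :
    (rootMirror hτ m).polarizeSet (lineRearr τ A) = lineRearr τ A := by
  refine Mirror.polarizeSet_eq_self fun x hx (hx' : affineReflection τ m x ∈ lineRearr τ A) => ?_
  rw [lineRearr, Set.mem_ofPred_eq, latLine_affineReflection] at hx'
  have hpos := posIdx_le_posIdx_reflect_iff.2 (mem_side_rootMirror.1 hx)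
  rw [← hτ.corootPairing_affineReflection] at hpos
  exact (Nat.cast_le.2 hpos).trans hx'

theorem mem_iff_le_encard_of_pred_mem {S : Set ℕ} (hpos : ∀ n ∈ S, 0 < n)
    (hpred : ∀ n > 0, n + 1 ∈ S → n ∈ S) {n : ℕ} (hn : 0 < n) : n ∈ S ↔ (n : ℕ∞) ≤ S.encard := by
  have hdown {k l : ℕ} (hk : 0 < k) (hkl : k ≤ l) (hl : l ∈ S) : k ∈ S := by
    induction l, hkl using Nat.le_induction with
    | base => exact hl
    | succ l hkl ih => exact ih (hpred l (hk.trans_le hkl) hl)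
  have hcard (k : ℕ) : (Set.Icc 1 k).encard = k := by simp [← Finset.coe_Icc]
  constructor
  · intro hnS
    rw [← hcard n]
    exact Set.encard_le_encard fun k hk => hdown hk.1 hk.2 hnS
  · contrapose!
    intro hnS
    have hsub : S ⊆ Set.Icc 1 (n - 1) := fun k hk =>
      ⟨hpos k hk, Nat.le_sub_one_of_lt (not_le.1 fun hnk => hnS (hdown hn hnk hk))⟩
    calc S.encard ≤ (n - 1 : ℕ) := (Set.encard_le_encard hsub).trans_eq (hcard _)
      _ < n := Nat.cast_lt.2 (Nat.sub_lt hn one_pos)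

theorem exists_linePos_pred (hτ : IsPosRoot τ)
    (hA : ∀ m ∈ ({0, 1} : Set ℤ), (rootMirror hτ m).polarizeSet A = A) (hx : x ∈ A)
    {n : ℕ} (hn : 0 < n) (hpos : linePos τ x = n + 1) :
    ∃ y ∈ A ∩ latLine τ x, linePos τ y = n := by
  obtain ⟨m, hm, hside, hmn⟩ : ∃ m ∈ ({0, 1} : Set ℤ),
      affineReflection τ m x ∈ (rootMirror hτ m).side ∧
        posIdx (2 * m - corootPairing τ x) = n := by
    simp only [mem_side_rootMirror, hτ.corootPairing_affineReflection, Set.mem_insert_iff,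
      Set.mem_singleton_iff, exists_eq_or_imp, exists_eq_left]
    unfold linePos posIdx at hpos
    unfold posIdx
    split_ifs at hpos ⊢ <;> omega
  refine ⟨affineReflection τ m x, ⟨?_, ?_⟩, ?_⟩
  · refine Mirror.mem_of_reflect_mem (hA m hm) hside ?_
    exact ((rootMirror hτ m).involutive x).symm ▸ hx
  · exact affineReflection_mem_latLine_iff.2 (self_mem_latLine τ x)
  · rwa [linePos, hτ.corootPairing_affineReflection]

theorem lineRearr_eq_self (hτ : IsPosRoot τ)
    (hA : ∀ m ∈ ({0, 1} : Set ℤ), (rootMirror hτ m).polarizeSet A = A) : lineRearr τ A = A := by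
  ext x
  let S := linePos τ '' (A ∩ latLine τ x)
  have hinj := (injOn_linePos hτ x).mono (Set.inter_subset_right (s := A))
  have hpred : ∀ n > 0, n + 1 ∈ S → n ∈ S := by
    rintro n hn ⟨y, ⟨hyA, hyx⟩, hy⟩
    obtain ⟨z, ⟨hzA, hzy⟩, hz⟩ := exists_linePos_pred hτ hA hyA hn hy
    obtain ⟨k, rfl⟩ := hyx
    exact ⟨z, ⟨hzA, latLine_add_smul τ x k ▸ hzy⟩, hz⟩
  have hpos : ∀ n ∈ S, 0 < n := Set.forall_mem_image.2 fun y _ => linePos_pos τ y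
  calc x ∈ lineRearr τ A ↔ linePos τ x ∈ S := by
        rw [mem_iff_le_encard_of_pred_mem hpos hpred (linePos_pos τ x), hinj.encard_image]
        rfl
    _ ↔ x ∈ A := by
        refine ⟨?_, fun hx => ⟨x, ⟨hx, self_mem_latLine τ x⟩, rfl⟩⟩
        rintro ⟨y, ⟨hyA, hyx⟩, hy⟩
        exact injOn_linePos hτ x hyx (self_mem_latLine τ x) hy ▸ hyA

end LineRearr

section Alternation

variable {d : ℕ} {τ : ZLat d} {A : Set (ZLat d)} {u v : ZLat d → NNReal}

theorem isLevelwise_polarize (hτ : IsPosRoot τ) (m : ℤ) :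
    IsLevelwise (weight alcoveNorm) (rootMirror hτ m).polarize (rootMirror hτ m).polarizeSet where
  superlevel u _ t := Mirror.superlevel_polarize _ u t
  improves _ hA := Mirror.improves_polarizeSet (fun _ => alcoveNorm_lt_of_mem_side hτ) hA

/-- The polarization in the mirror through the origin followed by that in the mirror next to it. -/
def polarizeTwice (hτ : IsPosRoot τ) : (ZLat d → NNReal) → ZLat d → NNReal :=
  (rootMirror hτ 1).polarize ∘ (rootMirror hτ 0).polarize

/-- The operator on superlevel sets that corresponds to `polarizeTwice`. -/
def polarizeSetTwice (hτ : IsPosRoot τ) : Set (ZLat d) → Set (ZLat d) :=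
  (rootMirror hτ 1).polarizeSet ∘ (rootMirror hτ 0).polarizeSet

theorem isLevelwise_polarizeTwice (hτ : IsPosRoot τ) :
    IsLevelwise (weight alcoveNorm) (polarizeTwice hτ) (polarizeSetTwice hτ) :=
  (isLevelwise_polarize hτ 1).comp (isLevelwise_polarize hτ 0)

theorem lineRearr_eq_self_of_polarizeSetTwice (hτ : IsPosRoot τ) (hA : A.Finite)
    (hfix : polarizeSetTwice hτ A = A) : lineRearr τ A = A := by
  have h₀ := (isLevelwise_polarize hτ 0).improves A hA
  have h₁ := (isLevelwise_polarize hτ 1).improves _ h₀.1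
  have hA₀ := h₀.antisymm (hfix.subst (motive := Improves _ _) h₁)
  refine lineRearr_eq_self hτ ?_
  rintro m (rfl | rfl)
  · exact hA₀
  · simpa only [polarizeSetTwice, Function.comp_apply, hA₀] using hfix

theorem lineRearr_polarizeSetTwice (hτ : IsPosRoot τ) (A : Set (ZLat d)) :
    lineRearr τ (polarizeSetTwice hτ A) = lineRearr τ A := by
  rw [polarizeSetTwice, Function.comp_apply, lineRearr_polarizeSet, lineRearr_polarizeSet]

theorem lineRearr_iterateSeq (hτ : IsPosRoot τ) (A : Set (ZLat d)) (k : ℕ) :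
    lineRearr τ (iterateSeq (fun _ => polarizeSetTwice hτ) A k) = lineRearr τ A := by
  induction k with
  | zero => rfl
  | succ k ih => rw [iterateSeq, lineRearr_polarizeSetTwice, ih]

theorem eventually_iterateSeq_eq_lineRearr (hτ : IsPosRoot τ) (hA : A.Finite) :
    ∀ᶠ k in atTop, iterateSeq (fun _ => polarizeSetTwice hτ) A k = lineRearr τ A := by
  have himproves := (isLevelwise_polarizeTwice hτ).improves
  have hconst := eventuallyConst_iterateSeq (fun _ => himproves) hA
  filter_upwards [eventually_atTop.2 (eventuallyConst_atTop_nat.1 hconst)] with k hk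
  rw [← lineRearr_iterateSeq hτ A k]
  exact (lineRearr_eq_self_of_polarizeSetTwice hτ
    (improves_iterateSeq (fun _ => himproves) hA k).1 hk).symm

theorem isLevelwise_stepR (hτ : IsPosRoot τ) :
    IsLevelwise (weight alcoveNorm) (stepR (halfCoroot τ)) (lineRearr τ) where
  superlevel _ hu t := superlevel_stepR hτ hu t
  improves A hA := by
    obtain ⟨k, hk⟩ := (eventually_iterateSeq_eq_lineRearr hτ hA).exists
    exact hk ▸ improves_iterateSeq (fun _ => (isLevelwise_polarizeTwice hτ).improves) hA k

theorem stabilizesTo_stepR (hτ : IsPosRoot τ) (hu : Admissible u) :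
    StabilizesTo (iterateSeq (fun _ => polarizeTwice hτ) u) (stepR (halfCoroot τ) u) := by
  intro t ht
  have hlevels : ∀ᶠ k in atTop, ∀ A ∈ {A | A ⊆ {x | t < u x}},
      iterateSeq (fun _ => polarizeSetTwice hτ) A k = lineRearr τ A :=
    (eventually_all_finite (hu t ht).finite_subsets).2 fun A hA =>
      eventually_iterateSeq_eq_lineRearr hτ ((hu t ht).subset hA)
  filter_upwards [hlevels] with k hk
  refine cutoff_eq_cutoff_iff.2 fun s => ?_
  rw [IsLevelwise.superlevel_iterateSeq (fun _ => isLevelwise_polarizeTwice hτ) hu,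
    superlevel_stepR hτ hu]
  exact hk _ fun x hx => (le_max_right s t).trans_lt hx

theorem energy_le_energy_stepR (hτ : IsPosRoot τ) {G : NNReal → NNReal → NNReal}
    (hG : Supermodular G) (hG0 : G 0 0 = 0) {H : ℕ → NNReal} (hH : Antitone H)
    (hu : Admissible u) (hv : Admissible v) :
    energy G (fun x y => H (latDist x y)) u v ≤
      energy G (fun x y => H (latDist x y)) (stepR (halfCoroot τ) u) (stepR (halfCoroot τ) v) := by
  refine (stabilizesTo_stepR hτ hu).energy_iterateSeq_le (stabilizesTo_stepR hτ hv) ?_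
    (fun _ => isLevelwise_polarizeTwice hτ) hu hv hG hG0 0
  intro _ u v _ _
  exact ((rootMirror_favors hτ 0 hH).energy_le_energy_polarize hG).trans
    ((rootMirror_favors hτ 1 hH).energy_le_energy_polarize hG)

end Alternation

/-! ### The Schwarz rearrangement -/

section Schwarz

/-- The direction of the `k`-th one-step rearrangement in `iterR`. -/
def cycleDir (d k : ℕ) : Fin d → ℝ := (EvecList d).getD (k % (EvecList d).length) 0

variable {d : ℕ} {τ : ZLat d} {u v : ZLat d → NNReal}

theorem iterR_eq_iterateSeq (u : ZLat d → NNReal) :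
    iterR d u = iterateSeq (fun k => stepR (cycleDir d k)) u := by
  ext1 k
  induction k with
  | zero => rfl
  | succ k ih => rw [iterR, iterateSeq, ih, cycleDir]

theorem IsPosRoot.frequently_cycleDir_eq (hτ : IsPosRoot τ) :
    ∃ᶠ k in atTop, cycleDir d k = halfCoroot τ := by
  obtain ⟨n, hn, hget⟩ := List.mem_iff_getElem.1 (mem_evecList_iff.2 ⟨τ, hτ, rfl⟩)
  refine (Nat.frequently_mod_eq hn).mono fun k hk => ?_
  rw [cycleDir, hk, List.getD_eq_getElem _ _ hn, hget]

variable [NeZero d]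

theorem exists_isPosRoot_cycleDir (d k : ℕ) [NeZero d] :
    ∃ τ : ZLat d, IsPosRoot τ ∧ halfCoroot τ = cycleDir d k := by
  have hlen : 0 < (EvecList d).length :=
    List.length_pos_of_mem (mem_evecList_iff.2 ⟨_, .single 0, rfl⟩)
  rw [← mem_evecList_iff, cycleDir, List.getD_eq_getElem _ _ (Nat.mod_lt k hlen)]
  exact List.getElem_mem _

theorem exists_isLevelwise_stepR_cycleDir (d : ℕ) [NeZero d] :
    ∃ ρ : ℕ → Set (ZLat d) → Set (ZLat d),
      ∀ k, IsLevelwise (weight alcoveNorm) (stepR (cycleDir d k)) (ρ k) := by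
  choose τ hτ hdir using exists_isPosRoot_cycleDir d
  exact ⟨fun k => lineRearr (τ k), fun k => hdir k ▸ isLevelwise_stepR (hτ k)⟩

theorem stabilizesTo_RZd (hu : Admissible u) :
    StabilizesTo (iterateSeq (fun k => stepR (cycleDir d k)) u) (RZd d u) := by
  obtain ⟨ρ, hρ⟩ := exists_isLevelwise_stepR_cycleDir d
  unfold RZd
  rw [iterR_eq_iterateSeq]
  exact stabilizesTo_limUnder fun t ht => IsLevelwise.eventuallyConst_cutoff_iterateSeq hρ hu ht

theorem stepR_RZd (hτ : IsPosRoot τ) (hu : Admissible u) :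
    stepR (halfCoroot τ) (RZd d u) = RZd d u := by
  obtain ⟨ρ, hρ⟩ := exists_isLevelwise_stepR_cycleDir d
  exact (stabilizesTo_RZd hu).apply_eq_of_frequently hρ hu
    (hτ.frequently_cycleDir_eq.mono fun k hk => by rw [hk])

theorem iterR_eq_self (hfix : ∀ τ, IsPosRoot τ → stepR (halfCoroot τ) u = u) (k : ℕ) :
    iterR d u k = u := by
  induction k with
  | zero => rfl
  | succ k ih =>
    obtain ⟨τ, hτ, hdir⟩ := exists_isPosRoot_cycleDir d k
    rw [iterR, ih, ← cycleDir, ← hdir, hfix τ hτ]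

theorem energy_iterR_le_energy_RZd {G : NNReal → NNReal → NNReal} (hG : Supermodular G)
    (hG0 : G 0 0 = 0) {H : ℕ → NNReal} (hH : Antitone H) (hu : Admissible u) (hv : Admissible v)
    (k : ℕ) : energy G (fun x y => H (latDist x y)) (iterR d u k) (iterR d v k) ≤
      energy G (fun x y => H (latDist x y)) (RZd d u) (RZd d v) := by
  obtain ⟨ρ, hρ⟩ := exists_isLevelwise_stepR_cycleDir d
  rw [iterR_eq_iterateSeq, iterR_eq_iterateSeq]
  refine (stabilizesTo_RZd hu).energy_iterateSeq_le (stabilizesTo_RZd hv) ?_ hρ hu hv hG hG0 k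
  intro k u v hu hv
  obtain ⟨τ, hτ, hdir⟩ := exists_isPosRoot_cycleDir d k
  exact hdir ▸ energy_le_energy_stepR hτ hG hG0 hH hu hv

theorem exists_iterR_eq_stepR_ne (hv : RZd d v ≠ v) :
    ∃ k τ, IsPosRoot τ ∧ iterR d v (k + 1) = stepR (halfCoroot τ) v ∧
      stepR (halfCoroot τ) v ≠ v := by
  obtain ⟨k, hk⟩ : ∃ k, iterR d v k ≠ v := by
    by_contra! hconst
    refine hv (funext fun x => ?_)
    simp only [RZd, hconst]
    exact tendsto_const_nhds.limUnder_eq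
  obtain ⟨n, hn, hne⟩ : ∃ n, iterR d v n = v ∧ iterR d v (n + 1) ≠ v := by
    by_contra! hstep
    exact hk (Nat.rec rfl hstep k)
  obtain ⟨τ, hτ, hdir⟩ := exists_isPosRoot_cycleDir d n
  have hsucc : iterR d v (n + 1) = stepR (halfCoroot τ) v := by rw [iterR, hn, hdir, cycleDir]
  exact ⟨n, τ, hτ, hsucc, hsucc ▸ hne⟩

end Schwarz

/-! ### Sets fixed by all line rearrangements -/

section FixedSets

variable {d : ℕ} {τ y z : ZLat d} {A : Set (ZLat d)} {i j : Fin d} {a L : ℤ}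

theorem mem_of_linePos_le (hA : lineRearr τ A = A) (hy : y ∈ A) {k : ℤ}
    (hpos : linePos τ (y + k • τ) ≤ linePos τ y) : y + k • τ ∈ A := by
  rw [← hA] at hy ⊢
  rw [lineRearr, Set.mem_ofPred_eq] at hy ⊢
  rw [latLine_add_smul]
  exact (Nat.cast_le.2 hpos).trans hy

theorem update_mem_of_abs_lt (hA : ∀ τ : ZLat d, IsPosRoot τ → lineRearr τ A = A) (hy : y ∈ A)
    (ha : |a| < |y i|) : Function.update y i a ∈ A := by
  have hupdate : Function.update y i a = y + (a - y i) • Pi.single i 1 := by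
    ext k
    by_cases hk : k = i
    · subst hk
      simp
    · simp [hk]
  have hpos : linePos (Pi.single i 1) (y + (a - y i) • Pi.single i 1) ≤
      linePos (Pi.single i 1) y := by
    rw [linePos, linePos, (IsPosRoot.single i).corootPairing_add_smul, corootPairing_single, posIdx,
      posIdx]
    rcases abs_cases (y i) with h | h <;> rcases abs_cases a with h' | h' <;>
      split_ifs <;> omega
  exact hupdate ▸ mem_of_linePos_le (hA _ (.single i)) hy hpos

theorem add_neg_smul_mem (hA : ∀ τ : ZLat d, IsPosRoot τ → lineRearr τ A = A) (hij : i ≠ j)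
    (hy : y ∈ A) (hL : 0 ≤ L) (hLy : 2 * L ≤ y i + y j) :
    y + (-L) • (Pi.single i 1 + Pi.single j 1) ∈ A := by
  wlog h : i < j generalizing i j
  · rw [add_comm (Pi.single i 1 : ZLat d)]
    exact this hij.symm (by rwa [add_comm]) (hij.lt_or_gt.resolve_left h)
  have hτ := IsPosRoot.pair h (.inl rfl)
  refine mem_of_linePos_le (hA _ hτ) hy ?_
  rw [linePos, linePos, hτ.corootPairing_add_smul, corootPairing_pair h (.inl rfl), posIdx, posIdx]
  split_ifs <;> omega

theorem update_update_mem (hA : ∀ τ : ZLat d, IsPosRoot τ → lineRearr τ A = A) (hij : i ≠ j)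
    (hy : y ∈ A) (ha : |a| < L) (hLy : 2 * L ≤ y i) :
    Function.update (Function.update y i (y i - L)) j a ∈ A := by
  have hL : 0 < L := (abs_nonneg a).trans_lt ha
  obtain ⟨x, hx, hxj, hxi⟩ : ∃ x ∈ A, x j = 0 ∧ ∀ k ≠ j, x k = y k := by
    by_cases hj : y j = 0
    · exact ⟨y, hy, hj, fun _ _ => rfl⟩
    · exact ⟨_, update_mem_of_abs_lt hA hy (by simpa using hj), Function.update_self ..,
        fun k hk => Function.update_of_ne hk ..⟩
  have hmove := add_neg_smul_mem hA hij hx hL.le (by rwa [hxi i hij, hxj, add_zero])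
  have hxj' : (x + (-L) • (Pi.single i 1 + Pi.single j 1) : ZLat d) j = -L := by
    simp [hxj, hij]
  convert update_mem_of_abs_lt hA hmove (i := j) (a := a) (by rwa [hxj', abs_neg, abs_of_pos hL])
    using 1
  ext k
  by_cases hkj : k = j
  · subst hkj
    simp
  · by_cases hki : k = i
    · subst hki
      simp [hkj, hxi, sub_eq_add_neg]
    · simp [hkj, hki, hxi]

-- Coordinate by coordinate, the surplus at `i` is traded for the desired value elsewhere.
theorem mem_of_apply_large (hA : ∀ τ : ZLat d, IsPosRoot τ → lineRearr τ A = A)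
    (hz : ∀ k, |z k| < L) {S : Finset (Fin d)} (hi : i ∉ S) (hy : y ∈ A)
    (hyz : ∀ k ≠ i, k ∉ S → y k = z k) (hyi : (S.card + 2) * L ≤ y i) : z ∈ A := by
  have hL : 0 < L := (abs_nonneg _).trans_lt (hz i)
  induction S using Finset.induction_on generalizing y with
  | empty =>
    have hzi : |z i| < |y i| := by
      refine (hz i).trans_le (le_trans ?_ (le_abs_self _))
      simp only [Finset.card_empty, Nat.cast_zero] at hyi
      linarith
    convert update_mem_of_abs_lt hA hy hzi using 1
    ext k
    by_cases hk : k = i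
    · subst hk
      simp
    · simp [hk, hyz]
  | insert j S hj ih =>
    rw [Finset.mem_insert, not_or] at hi
    rw [Finset.card_insert_of_notMem hj, Nat.cast_add_one] at hyi
    have hcard : 0 ≤ (S.card : ℤ) * L := by positivity
    refine ih hi.2 (update_update_mem hA hi.1 hy (hz j) (by linarith)) (fun k hki hkS => ?_) ?_
    · by_cases hkj : k = j
      · subst hkj
        simp
      · simp [hkj, hki, hyz k hki, hkS]
    · rw [Function.update_of_ne hi.1, Function.update_self]
      linarith

theorem exists_lt_abs_apply (hinf : A.Infinite) (M : ℤ) : ∃ y ∈ A, ∃ i, M < |y i| := by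
  by_contra! hbounded
  refine hinf ((Set.finite_Icc (fun _ : Fin d => -M) fun _ => M).subset fun y hy => ?_)
  exact ⟨fun i => (abs_le.1 (hbounded y hy i)).1, fun i => (abs_le.1 (hbounded y hy i)).2⟩

theorem eq_univ_of_lineRearr_eq_self (hA : ∀ τ : ZLat d, IsPosRoot τ → lineRearr τ A = A)
    (hinf : A.Infinite) : A = Set.univ := by
  refine Set.eq_univ_of_forall fun z => ?_
  let L := ∑ k, |z k| + 1
  have hz (k : Fin d) : |z k| < L :=
    Int.lt_add_one_of_le (Finset.single_le_sum (fun k _ => abs_nonneg (z k)) (Finset.mem_univ k))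
  obtain ⟨y, hy, i, hi⟩ := exists_lt_abs_apply hinf ((d + 2) * L)
  have hlarge : |(d + 2) * L| < |y i| := by rwa [abs_of_pos (by positivity)]
  refine mem_of_apply_large hA hz (Finset.notMem_erase i Finset.univ)
    (update_mem_of_abs_lt hA hy hlarge) (fun k hk hk' => absurd hk' (by simp [hk])) ?_
  have hcard : ((Finset.univ.erase i).card : ℤ) ≤ d := by
    exact_mod_cast (Finset.card_le_univ _).trans_eq (Fintype.card_fin d)
  rw [Function.update_self]
  gcongr

end FixedSets

/-! ### The equality case -/

section Equality

variable {d : ℕ} {τ : ZLat d} {u v : ZLat d → NNReal}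

theorem stepR_polarize (hτ : IsPosRoot τ) (m : ℤ) (hu : Admissible u) :
    stepR (halfCoroot τ) ((rootMirror hτ m).polarize u) = stepR (halfCoroot τ) u :=
  eq_of_superlevel_eq fun t => by
    rw [superlevel_stepR hτ ((isLevelwise_polarize hτ m).admissible hu),
      Mirror.superlevel_polarize, lineRearr_polarizeSet, superlevel_stepR hτ hu]

theorem polarize_stepR (hτ : IsPosRoot τ) (m : ℤ) (hu : Admissible u) :
    (rootMirror hτ m).polarize (stepR (halfCoroot τ) u) = stepR (halfCoroot τ) u :=
  eq_of_superlevel_eq fun t => by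
    rw [Mirror.superlevel_polarize, superlevel_stepR hτ hu, polarizeSet_lineRearr]

theorem stepR_eq_self (hτ : IsPosRoot τ) (hu : Admissible u)
    (hfix : ∀ m ∈ ({0, 1} : Set ℤ), (rootMirror hτ m).polarize u = u) :
    stepR (halfCoroot τ) u = u :=
  eq_of_superlevel_eq fun t => by
    rw [superlevel_stepR hτ hu]
    refine lineRearr_eq_self hτ fun m hm => ?_
    rw [← Mirror.superlevel_polarize, hfix m hm]

theorem pos_of_stepR_eq_self (hu : Admissible u)
    (hfix : ∀ τ, IsPosRoot τ → stepR (halfCoroot τ) u = u) (hinf : {x | 0 < u x}.Infinite)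
    (x : ZLat d) : 0 < u x := by
  have huniv := eq_univ_of_lineRearr_eq_self (fun τ hτ => by
    rw [← superlevel_stepR hτ hu, hfix τ hτ]) hinf
  exact huniv.symm.subset (Set.mem_univ x)

variable {G : NNReal → NNReal → NNReal} {H : ℕ → NNReal}

theorem energy_lt_energy_polarize (hτ : IsPosRoot τ) (m : ℤ) (hG : StrictlySupermodular G)
    (hH : Antitone H) {n : ℕ} (hn : H (n + 1) < H n) (huinj : Function.Injective u)
    (hu : (rootMirror hτ m).polarize u = u) (hv : (rootMirror hτ m).polarize v ≠ v)
    (hfin : energy G (fun x y => H (latDist x y)) u ((rootMirror hτ m).polarize v) < ⊤) :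
    energy G (fun x y => H (latDist x y)) u v <
      energy G (fun x y => H (latDist x y)) u ((rootMirror hτ m).polarize v) := by
  obtain ⟨y, hy, hvy⟩ := Mirror.exists_lt_reflect_of_polarize_ne hv
  have hyne : corootPairing τ y ≠ m := fun h =>
    hvy.ne' (congrArg v (hτ.affineReflection_eq_self_iff.2 h))
  obtain ⟨x, hxy, hnear, hfar⟩ := hτ.exists_latDist_lt hyne n
  have hx : x ∈ (rootMirror hτ m).side := by
    rw [mem_side_rootMirror] at hy ⊢
    rcases pos_and_pos_or_neg_and_neg_of_mul_pos hxy with h | h <;> omega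
  have hux : u (affineReflection τ m x) < u x := by
    refine lt_of_le_of_ne ?_ fun h => ?_
    · calc u (affineReflection τ m x) ≤ (rootMirror hτ m).polarize u x :=
            (le_max_right _ _).trans_eq (Mirror.polarize_of_mem_side hx).symm
        _ = u x := by rw [hu]
    · have := hτ.affineReflection_eq_self_iff.1 (huinj h)
      simp [this] at hxy
  have hdrop : H (latDist x (affineReflection τ m y)) < H (latDist x y) :=
    (hH hfar).trans_lt (hn.trans_le (hH hnear))
  conv_rhs => rw [← hu]
  refine (rootMirror_favors hτ m hH).energy_lt_energy_polarize hG hx hy hdrop hux hvy ?_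
  rwa [hu]

theorem energy_lt_energy_stepR (hτ : IsPosRoot τ) (hG : StrictlySupermodular G) (hG0 : G 0 0 = 0)
    (hH : Antitone H) {n : ℕ} (hn : H (n + 1) < H n) (hu : Admissible u)
    (huinj : Function.Injective u) (hufix : stepR (halfCoroot τ) u = u) (hv : Admissible v)
    (hvne : stepR (halfCoroot τ) v ≠ v)
    (hfin : energy G (fun x y => H (latDist x y)) u (stepR (halfCoroot τ) v) < ⊤) :
    energy G (fun x y => H (latDist x y)) u v <
      energy G (fun x y => H (latDist x y)) u (stepR (halfCoroot τ) v) := by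
  obtain ⟨m, hm⟩ : ∃ m : ℤ, (rootMirror hτ m).polarize v ≠ v := by
    by_contra! hfix
    exact hvne (stepR_eq_self hτ hv fun m _ => hfix m)
  have hupol : (rootMirror hτ m).polarize u = u := by
    rw [← hufix, polarize_stepR hτ m hu]
  have hle := energy_le_energy_stepR hτ hG.supermodular hG0 hH hu
    ((isLevelwise_polarize hτ m).admissible hv)
  rw [hufix, stepR_polarize hτ m hv] at hle
  exact (energy_lt_energy_polarize hτ m hG hH hn huinj hupol hm (hle.trans_lt hfin)).trans_le hle

theorem energy_RZd_eq_iff [NeZero d] (hG : StrictlySupermodular G) (hG0 : G 0 0 = 0)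
    (hH : Antitone H) {n : ℕ} (hn : H (n + 1) < H n) (hu : Admissible u) (hufix : RZd d u = u)
    (hran : StrictRan u) (hv : Admissible v)
    (hfin : energy G (fun x y => H (latDist x y)) u (RZd d v) < ⊤) :
    energy G (fun x y => H (latDist x y)) u v = energy G (fun x y => H (latDist x y)) u (RZd d v) ↔
      v = RZd d v := by
  refine ⟨fun heq => ?_, fun h => by rw [← h]⟩
  by_contra hne
  have hustep (τ : ZLat d) (hτ : IsPosRoot τ) : stepR (halfCoroot τ) u = u := by
    simpa only [hufix] using stepR_RZd hτ hu
  have hpos := pos_of_stepR_eq_self hu hustep (hran.infinite_support hu)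
  have huinj : Function.Injective u := fun x y => hran.injOn_support hu (hpos x) (hpos y)
  obtain ⟨k, τ, hτ, hsucc, hvne⟩ := exists_iterR_eq_stepR_ne (Ne.symm hne)
  have hle : energy G (fun x y => H (latDist x y)) u (stepR (halfCoroot τ) v) ≤
      energy G (fun x y => H (latDist x y)) u (RZd d v) := by
    have := energy_iterR_le_energy_RZd hG.supermodular hG0 hH hu hv (k + 1)
    rwa [iterR_eq_self hustep, hsucc, hufix] at this
  exact ((energy_lt_energy_stepR hτ hG hG0 hH hn hu huinj (hustep τ hτ) hv hvne
    (hle.trans_lt hfin)).trans_le hle).ne heq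

end Equality

theorem stmt11_general {d : ℕ} [NeZero d] {u v : ZLat d → NNReal} (hu : Admissible u)
    (hv : Admissible v) {H : ℕ → NNReal} (hH : Antitone H) {G : NNReal → NNReal → NNReal}
    (hG : Supermodular G) (hG0 : G 0 0 = 0) :
    energy G (fun x y => H (latDist x y)) u v ≤
      energy G (fun x y => H (latDist x y)) (RZd d u) (RZd d v) ∧
    (RZd d u = u → StrictRan u → StrictlySupermodular G → (∃ n, H (n + 1) < H n) →
      energy G (fun x y => H (latDist x y)) (RZd d u) (RZd d v) < ⊤ →
      (energy G (fun x y => H (latDist x y)) u v =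
          energy G (fun x y => H (latDist x y)) (RZd d u) (RZd d v) ↔ v = RZd d v)) := by
  refine ⟨energy_iterR_le_energy_RZd hG hG0 hH hu hv 0, ?_⟩
  rintro hufix hran hGstrict ⟨n, hn⟩ hfin
  rw [hufix] at hfin ⊢
  exact energy_RZd_eq_iff hGstrict hG0 hH hn hu hufix hran hv hfin

/-- Generalized discrete Riesz inequality on ℤ^d, with the characterization of the
equality case. -/
theorem stmt11 (d : ℕ) (hd : 2 ≤ d) (u v : ZLat d → NNReal)
    (hu : Admissible u) (hv : Admissible v)
    (H : NNReal → NNReal) (hH : Antitone H)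
    (G : NNReal → NNReal → NNReal) (hG : Supermodular G) (hG0 : G 0 0 = 0) :
    (∑' (x : ZLat d) (y : ZLat d), ((G (u x) (v y) * H (latDist x y) : NNReal) : ENNReal) ≤
      ∑' (x : ZLat d) (y : ZLat d),
        ((G (RZd d u x) (RZd d v y) * H (latDist x y) : NNReal) : ENNReal)) ∧
    (RZd d u = u → StrictRan u → StrictlySupermodular G →
      (∃ n : ℕ, H ((n : NNReal) + 1) < H (n : NNReal)) →
      (∑' (x : ZLat d) (y : ZLat d),
          ((G (RZd d u x) (RZd d v y) * H (latDist x y) : NNReal) : ENNReal)) < ⊤ →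
      ((∑' (x : ZLat d) (y : ZLat d), ((G (u x) (v y) * H (latDist x y) : NNReal) : ENNReal)) =
        (∑' (x : ZLat d) (y : ZLat d),
          ((G (RZd d u x) (RZd d v y) * H (latDist x y) : NNReal) : ENNReal)) ↔
        v = RZd d v)) := by
  have : NeZero d := ⟨by omega⟩
  simpa only [energy, Function.comp_apply, Nat.cast_succ] using
    stmt11_general hu hv (hH.comp_monotone Nat.mono_cast) hG hG0

end
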